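/- arXiv:math/0703473 — 8 statements merged into one kernel-verified Lean document; each statement's English description precedes it below -/
import Mathlib

section
/- Let p be a rational prime with p ≡ 1 (mod 4), let π ∈ ℤ[i] be a prime element dividing (p : ℤ[i]), and let k ≥ 1. Then the canonical ring homomorphism ℤ → ℤ[i]/(π^k) is surjective with kernel p^kℤ, inducing a ring isomorphism ZMod (p^k) ≃ ℤ[i]/(π^k); in particular the additive group of ℤ[i]/(π^k) is cyclic of order p^k, generated by the class of 1. -/
local notation "ℤ[i]" => GaussianInt

/-!
Let `z ∈ ℤ√d` be coprime to its conjugate, say `a * z + b * star z = 1`. Modulo `z`, every `x` is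
congruent to `x * b * star z`, whose conjugate is a multiple of `z`, so `x` is congruent to the
trace of `x * b * star z`, an integer. An integer divisible by `z` is also divisible by `star z`,
hence by `z * star z = z.norm`. Therefore `ℤ → ℤ√d ⧸ (z)` is onto with kernel generated by `z.norm`.

Coprimality with the conjugate passes to powers. It holds for `π` as soon as the trace and the norm
of `π` are coprime: `π.norm = p` is an odd prime, and `p ∣ π.re` would give `p ∣ π.im` and then
`p ^ 2 ∣ π.norm`.
-/

section IntegerQuotients

variable {A : Type*} [Ring A]

/-- The isomorphism `ZMod n ≃+* A` induced by the canonical map `ℤ → A`, when that map is surjective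
with kernel `nℤ`. -/
noncomputable def zmodEquivOfSurjectiveOfKer {n : ℕ}
    (hsurj : Function.Surjective (Int.castRingHom A))
    (hker : RingHom.ker (Int.castRingHom A) = Ideal.span {(n : ℤ)}) : ZMod n ≃+* A :=
  (Int.quotientSpanNatEquivZMod n).symm.trans <|
    (Ideal.quotEquivOfEq hker.symm).trans (RingHom.quotientKerEquivOfSurjective hsurj)

lemma zmultiples_one_eq_top_of_surjective_intCast
    (hsurj : Function.Surjective (Int.castRingHom A)) :
    AddSubgroup.zmultiples (1 : A) = ⊤ := by
  rw [← Int.range_castAddHom, AddMonoidHom.range_eq_top]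
  exact hsurj

end IntegerQuotients

section QuadraticRings

variable {d : ℤ} {z : ℤ√d}

lemma add_star_eq_intCast (z : ℤ√d) : z + star z = ((2 * z.re : ℤ) : ℤ√d) := by
  ext <;> simp [two_mul]

lemma natAbs_norm_pow (z : ℤ√d) (k : ℕ) : (z ^ k).norm.natAbs = z.norm.natAbs ^ k := by
  rw [← Int.natAbs_pow]
  exact congrArg Int.natAbs (map_pow Zsqrtd.normMonoidHom z k)

lemma dvd_intCast_iff_norm_dvd (hz : IsCoprime z (star z)) (a : ℤ) :
    z ∣ (a : ℤ√d) ↔ z.norm ∣ a := by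
  rw [← Zsqrtd.intCast_dvd_intCast, Zsqrtd.norm_eq_mul_conj]
  refine ⟨fun h ↦ hz.mul_dvd h ?_, dvd_of_mul_right_dvd⟩
  simpa [starRingEnd_apply] using map_dvd (starRingEnd (ℤ√d)) h

lemma exists_dvd_sub_intCast (hz : IsCoprime z (star z)) (x : ℤ√d) :
    ∃ n : ℤ, z ∣ x - n := by
  obtain ⟨a, b, hab⟩ := hz
  refine ⟨2 * (x * b * star z).re, x * a - star (x * b), ?_⟩
  rw [← add_star_eq_intCast, star_mul, star_star]
  linear_combination -x * hab

lemma surjective_intCast_quotient_span (hz : IsCoprime z (star z)) :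
    Function.Surjective (Int.castRingHom (ℤ√d ⧸ Ideal.span {z})) := by
  intro q
  obtain ⟨x, rfl⟩ := Ideal.Quotient.mk_surjective q
  obtain ⟨n, hn⟩ := exists_dvd_sub_intCast hz x
  refine ⟨n, ?_⟩
  rw [eq_intCast, ← map_intCast (Ideal.Quotient.mk (Ideal.span {z})), eq_comm, Ideal.Quotient.eq,
    Ideal.mem_span_singleton]
  exact hn

lemma ker_intCast_quotient_span (hz : IsCoprime z (star z)) :
    RingHom.ker (Int.castRingHom (ℤ√d ⧸ Ideal.span {z})) = Ideal.span {z.norm} := by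
  ext a
  rw [RingHom.mem_ker, eq_intCast, ← map_intCast (Ideal.Quotient.mk (Ideal.span {z})),
    Ideal.Quotient.eq_zero_iff_mem, Ideal.mem_span_singleton, Ideal.mem_span_singleton,
    dvd_intCast_iff_norm_dvd hz]

lemma isCoprime_star_of_isCoprime_norm (hz : IsCoprime (2 * z.re) z.norm) :
    IsCoprime z (star z) := by
  have htrace : IsCoprime (z + star z) (z * star z) := by
    rw [add_star_eq_intCast, ← Zsqrtd.norm_eq_mul_conj]
    exact hz.intCast
  simpa using htrace.of_mul_right_left.symm.add_mul_left_right (-1)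

lemma not_norm_dvd_re_of_prime_norm (hz : Prime z.norm) (hd : ¬ z.norm ∣ d) : ¬ z.norm ∣ z.re := by
  intro hre
  have hsq : z.norm ∣ d * z.im ^ 2 := by
    rw [show d * z.im ^ 2 = z.re * z.re - z.norm by rw [Zsqrtd.norm_def]; ring]
    exact dvd_sub (hre.mul_right _) dvd_rfl
  have him : z.norm ∣ z.im := hz.dvd_of_dvd_pow ((hz.dvd_or_dvd hsq).resolve_left hd)
  have hmul : z.norm * z.norm ∣ z.norm * 1 :=
    calc z.norm * z.norm ∣ z.re * z.re - d * (z.im * z.im) :=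
          dvd_sub (mul_dvd_mul hre hre) ((mul_dvd_mul him him).mul_left d)
      _ = z.norm * 1 := by rw [Zsqrtd.norm_def]; ring
  exact hz.not_dvd_one ((mul_dvd_mul_iff_left hz.ne_zero).1 hmul)

lemma isCoprime_star_of_prime_norm (hz : Prime z.norm) (hd : ¬ z.norm ∣ 2 * d) :
    IsCoprime z (star z) := by
  refine isCoprime_star_of_isCoprime_norm (hz.coprime_iff_not_dvd.2 fun h ↦ ?_).symm
  rcases hz.dvd_or_dvd h with htwo | hre
  · exact hd (htwo.mul_right d)
  · exact not_norm_dvd_re_of_prime_norm hz (fun h ↦ hd (h.mul_left 2)) hre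

lemma natAbs_norm_eq_of_prime_dvd_natCast {p : ℕ} (hp : p.Prime) (hsplit : ¬ Prime (p : ℤ√d))
    (hz : Prime z) (hdvd : z ∣ (p : ℤ√d)) : z.norm.natAbs = p := by
  obtain ⟨w, hw⟩ := hdvd
  have hwu : ¬ IsUnit w := fun hu ↦
    hsplit (hw ▸ (associated_mul_unit_right z w hu).prime hz)
  have hmul : z.norm.natAbs * w.norm.natAbs = p ^ 2 := by
    rw [← Int.natAbs_mul, ← Zsqrtd.norm_mul, ← hw, Zsqrtd.norm_natCast, Int.natAbs_mul,
      Int.natAbs_natCast, sq]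
  exact ((hp.mul_eq_prime_sq_iff (mt Zsqrtd.norm_eq_one_iff.1 hz.not_isUnit)
    (mt Zsqrtd.norm_eq_one_iff.1 hwu)).1 hmul).1

theorem gaussian_quotient_split_prime_power_general (n k : ℕ) (hn : z.norm.natAbs = n)
    (hz : IsCoprime z (star z)) :
    Function.Surjective (Int.castRingHom (ℤ√d ⧸ Ideal.span {z ^ k})) ∧
    RingHom.ker (Int.castRingHom (ℤ√d ⧸ Ideal.span {z ^ k})) = Ideal.span {((n : ℤ) ^ k)} ∧
    (∃ e : ZMod (n ^ k) ≃+* (ℤ√d ⧸ Ideal.span {z ^ k}),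
      ∀ a : ℤ, e (a : ZMod (n ^ k)) = (a : ℤ√d ⧸ Ideal.span {z ^ k})) ∧
    AddSubgroup.zmultiples (1 : ℤ√d ⧸ Ideal.span {z ^ k}) = ⊤ ∧
    Nat.card (ℤ√d ⧸ Ideal.span {z ^ k}) = n ^ k := by
  have hzk : IsCoprime (z ^ k) (star (z ^ k)) := by
    rw [star_pow]
    exact hz.pow
  have hsurj := surjective_intCast_quotient_span hzk
  have hker : RingHom.ker (Int.castRingHom (ℤ√d ⧸ Ideal.span {z ^ k})) =
      Ideal.span {((n ^ k : ℕ) : ℤ)} := by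
    rw [ker_intCast_quotient_span hzk, ← Int.span_natAbs, natAbs_norm_pow, hn]
  let e := zmodEquivOfSurjectiveOfKer hsurj hker
  refine ⟨hsurj, ?_, ⟨e, map_intCast e⟩, zmultiples_one_eq_top_of_surjective_intCast hsurj, ?_⟩
  · rw [hker, Nat.cast_pow]
  · rw [← Nat.card_congr e.toEquiv, Nat.card_zmod]

end QuadraticRings

section GaussianIntegers

variable {p : ℕ} {π : ℤ[i]}

lemma gaussianInt_natAbs_norm_eq_of_prime_dvd_natCast (hp : p.Prime) (hp3 : p % 4 ≠ 3)
    (hπ : Prime π) (hdvd : π ∣ (p : ℤ[i])) : π.norm.natAbs = p :=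
  have : Fact p.Prime := ⟨hp⟩
  natAbs_norm_eq_of_prime_dvd_natCast hp
    (mt (GaussianInt.mod_four_eq_three_of_nat_prime_of_prime p) hp3) hπ hdvd

lemma gaussianInt_isCoprime_star_of_natAbs_norm_eq (hp : p.Prime) (hp2 : p ≠ 2)
    (hnorm : π.norm.natAbs = p) : IsCoprime π (star π) := by
  refine isCoprime_star_of_prime_norm (Int.prime_iff_natAbs_prime.2 (hnorm ▸ hp)) fun h ↦ hp2 ?_
  have hdvd : p ∣ 2 := hnorm ▸ Int.natAbs_dvd_natAbs.2 h
  exact (Nat.prime_dvd_prime_iff_eq hp Nat.prime_two).1 hdvd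

end GaussianIntegers

/-- for a rational prime `p ≡ 1 (mod 4)`, a prime `π ∈ ℤ[i]` dividing `p`,
and `k ≥ 1`, the canonical ring homomorphism `ℤ → ℤ[i]/(π^k)` is surjective with kernel
`p^k ℤ`, inducing a ring isomorphism `ZMod (p^k) ≃ ℤ[i]/(π^k)`; in particular the
additive group of `ℤ[i]/(π^k)` is cyclic of order `p^k`, generated by the class of `1`. -/
theorem gaussian_quotient_split_prime_power (p k : ℕ) (hp : p.Prime) (hp4 : p % 4 = 1)
    (π : ℤ[i]) (hπ : Prime π) (hdvd : π ∣ (p : ℤ[i])) (hk : 1 ≤ k) :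
    Function.Surjective
      (Int.castRingHom (ℤ[i] ⧸ Ideal.span {π ^ k})) ∧
    RingHom.ker (Int.castRingHom (ℤ[i] ⧸ Ideal.span {π ^ k})) =
      Ideal.span {((p : ℤ) ^ k)} ∧
    (∃ e : ZMod (p ^ k) ≃+* (ℤ[i] ⧸ Ideal.span {π ^ k}),
      ∀ a : ℤ, e (a : ZMod (p ^ k)) = ((a : ℤ[i] ⧸ Ideal.span {π ^ k}))) ∧
    AddSubgroup.zmultiples (1 : ℤ[i] ⧸ Ideal.span {π ^ k}) = ⊤ ∧
    Nat.card (ℤ[i] ⧸ Ideal.span {π ^ k}) = p ^ k := by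
  have hnorm := gaussianInt_natAbs_norm_eq_of_prime_dvd_natCast hp (by lia) hπ hdvd
  exact gaussian_quotient_split_prime_power_general p k hnorm
    (gaussianInt_isCoprime_star_of_natAbs_norm_eq hp (by lia) hnorm)
end

section
/- Let p be a rational prime with p ≡ 1 (mod 6), let π ∈ ℤ[ζ] be a prime element dividing (p : ℤ[ζ]), and let k ≥ 1. Then the canonical ring homomorphism ℤ → ℤ[ζ]/(π^k) is surjective with kernel p^kℤ, inducing a ring isomorphism ZMod (p^k) ≃ ℤ[ζ]/(π^k); in particular the additive group of ℤ[ζ]/(π^k) is cyclic of order p^k, generated by the class of 1. -/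
open Polynomial

/-- The ring of Eisenstein integers `ℤ[ζ]`, with `ζ` a primitive cube root of unity. -/
abbrev Eisenstein : Type := AdjoinRoot (X ^ 2 + X + 1 : ℤ[X])

/-!
A prime `p ≡ 1 (mod 3)` splits completely in `ℤ[ζ]`: modulo `p`, the polynomial `X² + X + 1`
divides `X ^ p - X`, hence is a product of distinct linear factors. Linear factors make the residue
field `ℤ[ζ]/(π)` equal to `𝔽_p`; distinctness makes `ℤ[ζ]/(p)` reduced, so `p = π * σ` with `π ∤ σ`.
Then `p` is a uniformizer at `π`: its powers give integer approximations modulo every `π ^ k`, and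
`π` divides an integer exactly as often as `p` does.
-/

section IntQuotient

variable {S : Type*} [CommRing S] {n : ℕ}

theorem exists_zmod_ringEquiv_of_surjective_of_ker_eq
    (hsurj : Function.Surjective (Int.castRingHom S))
    (hker : RingHom.ker (Int.castRingHom S) = Ideal.span {(n : ℤ)}) :
    ∃ e : ZMod n ≃+* S, ∀ a : ℤ, e (a : ZMod n) = (a : S) :=
  let e := (Int.quotientSpanNatEquivZMod n).symm.trans
    ((Ideal.quotEquivOfEq hker.symm).trans (RingHom.quotientKerEquivOfSurjective hsurj))
  ⟨e, map_intCast e⟩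

theorem intCast_surjective_of_map_X_eq_intCast {ψ : ℤ[X] →+* S} (hψ : Function.Surjective ψ)
    {r : ℤ} (hr : ψ X = r) : Function.Surjective (Int.castRingHom S) := by
  have hfactor : ψ = (Int.castRingHom S).comp (evalRingHom r) := by
    refine ringHom_ext (by simp) ?_
    simpa using hr
  rw [hfactor, RingHom.coe_comp] at hψ
  exact hψ.of_comp

theorem zmultiples_one_eq_top_of_intCast_surjective
    (hsurj : Function.Surjective (Int.castRingHom S)) :
    AddSubgroup.zmultiples (1 : S) = ⊤ := by
  rw [← Int.range_castAddHom]
  exact AddMonoidHom.range_eq_top.mpr hsurj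

end IntQuotient

section DegreeOnePrime

variable {R : Type*} [CommRing R] {p : ℕ} {π σ : R}

theorem intCast_surjective_quotient_span_singleton_iff {a : R} :
    Function.Surjective (Int.castRingHom (R ⧸ Ideal.span {a})) ↔
      ∀ x : R, ∃ m : ℤ, a ∣ x - m := by
  rw [Function.Surjective, Ideal.Quotient.mk_surjective.forall]
  refine forall_congr' fun x ↦ exists_congr fun m ↦ ?_
  rw [eq_comm, eq_intCast, ← map_intCast (Ideal.Quotient.mk (Ideal.span {a})),
    Ideal.Quotient.eq, Ideal.mem_span_singleton]

theorem dvd_intCast_iff_of_dvd_prime (hp : p.Prime) (hπ : ¬IsUnit π) (hdvd : π ∣ (p : R))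
    {m : ℤ} : π ∣ (m : R) ↔ (p : ℤ) ∣ m := by
  have hpπ : π ∣ ((p : ℤ) : R) := by rwa [Int.cast_natCast]
  refine ⟨fun hm ↦ ?_, fun h ↦ hpπ.trans (Int.cast_dvd_cast _ _ h)⟩
  by_contra hpm
  have hcop : IsCoprime (p : ℤ) m :=
    (Nat.prime_iff_prime_int.mp hp).irreducible.coprime_iff_not_dvd.mpr hpm
  exact hπ (hcop.intCast.isUnit_of_dvd' hpπ hm)

theorem charP_quotient_span_singleton (hp : p.Prime) (hπ : ¬IsUnit π) (hdvd : π ∣ (p : R)) :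
    CharP (R ⧸ Ideal.span {π}) p where
  cast_eq_zero_iff n := by
    rw [← map_natCast (Ideal.Quotient.mk (Ideal.span {π})), Ideal.Quotient.eq_zero_iff_mem,
      Ideal.mem_span_singleton, ← Int.cast_natCast, dvd_intCast_iff_of_dvd_prime hp hπ hdvd,
      Int.natCast_dvd_natCast]

theorem isCoprime_of_intCast_surjective (hp : p.Prime) (hdvd : π ∣ (p : R)) (hπσ : ¬π ∣ σ)
    (hres : Function.Surjective (Int.castRingHom (R ⧸ Ideal.span {π}))) : IsCoprime π σ := by
  obtain ⟨m, c, hc⟩ := intCast_surjective_quotient_span_singleton_iff.mp hres σ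
  have hpm : ¬(p : ℤ) ∣ m := by
    rwa [← dvd_intCast_iff_of_dvd_prime hp (hπσ ·.dvd) hdvd, ← dvd_iff_dvd_of_dvd_sub ⟨c, hc⟩]
  have hcop : IsCoprime ((p : ℤ) : R) (m : R) :=
    ((Nat.prime_iff_prime_int.mp hp).irreducible.coprime_iff_not_dvd.mpr hpm).intCast
  rw [Int.cast_natCast] at hcop
  rw [eq_add_of_sub_eq hc]
  exact (hcop.of_isCoprime_of_dvd_left hdvd).mul_add_left_right c

-- If `x = m + π ^ k * y` and `σ ^ k * n ≡ y` modulo `π`, then `m + p ^ k * n` approximates `x`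
-- modulo `π ^ (k + 1)`, because `p ^ k = π ^ k * σ ^ k`.
theorem intCast_surjective_quotient_span_pow (hσ : (p : R) = π * σ) (hcop : IsCoprime π σ)
    (hres : Function.Surjective (Int.castRingHom (R ⧸ Ideal.span {π}))) (k : ℕ) :
    Function.Surjective (Int.castRingHom (R ⧸ Ideal.span {π ^ k})) := by
  rw [intCast_surjective_quotient_span_singleton_iff] at hres ⊢
  intro x
  induction k with
  | zero => exact ⟨0, by simp⟩
  | succ k ih =>
    obtain ⟨m, y, hy⟩ := ih
    obtain ⟨a, τ, hτ⟩ := hcop.pow_right (n := k)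
    obtain ⟨n, c, hn⟩ := hres (τ * y)
    refine ⟨m + p ^ k * n, a * y + σ ^ k * c, ?_⟩
    push_cast
    rw [hσ, mul_pow]
    linear_combination hy - π ^ k * y * hτ + π ^ k * σ ^ k * hn

variable [IsDomain R]

theorem pow_dvd_of_pow_dvd_intCast (hp : p.Prime) (hπ : Prime π) (hσ : (p : R) = π * σ)
    (hπσ : ¬π ∣ σ) {k : ℕ} {n : ℤ} (hn : π ^ k ∣ (n : R)) : (p : ℤ) ^ k ∣ n := by
  induction k generalizing n with
  | zero => simp
  | succ k ih =>
    obtain ⟨m, rfl⟩ : (p : ℤ) ∣ n :=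
      (dvd_intCast_iff_of_dvd_prime hp hπ.not_isUnit ⟨σ, hσ⟩).mp
        ((dvd_pow_self π k.succ_ne_zero).trans hn)
    have hσm : π ^ k ∣ σ * m := by
      refine (mul_dvd_mul_iff_left hπ.ne_zero).mp ?_
      simpa [pow_succ', hσ, mul_assoc] using hn
    rw [pow_succ']
    exact mul_dvd_mul_left _ (ih (hπ.pow_dvd_of_dvd_mul_left k hπσ hσm))

theorem ker_intCastRingHom_quotient_span_pow (hp : p.Prime) (hπ : Prime π)
    (hσ : (p : R) = π * σ) (hπσ : ¬π ∣ σ) (k : ℕ) :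
    RingHom.ker (Int.castRingHom (R ⧸ Ideal.span {π ^ k})) = Ideal.span {(p : ℤ) ^ k} := by
  ext n
  rw [RingHom.mem_ker, eq_intCast, ← map_intCast (Ideal.Quotient.mk (Ideal.span {π ^ k})),
    Ideal.Quotient.eq_zero_iff_mem, Ideal.mem_span_singleton, Ideal.mem_span_singleton]
  refine ⟨pow_dvd_of_pow_dvd_intCast hp hπ hσ hπσ, fun h ↦ ?_⟩
  calc π ^ k ∣ (p : R) ^ k := pow_dvd_pow_of_dvd ⟨σ, hσ⟩ k
    _ = (((p : ℤ) ^ k : ℤ) : R) := by simp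
    _ ∣ (n : R) := Int.cast_dvd_cast _ _ h

end DegreeOnePrime

section ReductionModPrime

variable {A B : Type*} [CommRing A] [CommRing B] {φ : A →+* B} {a : A} {f : A[X]}

theorem adjoinRoot_of_dvd_mk_iff (hφ : Function.Surjective φ)
    (hker : RingHom.ker φ = Ideal.span {a}) {g : A[X]} :
    AdjoinRoot.of f a ∣ AdjoinRoot.mk f g ↔ f.map φ ∣ g.map φ := by
  have hφa : φ a = 0 := by
    rw [← RingHom.mem_ker, hker]
    exact Ideal.mem_span_singleton_self a
  constructor
  · rintro ⟨c, hc⟩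
    obtain ⟨h, rfl⟩ := AdjoinRoot.mk_surjective c
    rw [← AdjoinRoot.mk_C, ← map_mul, AdjoinRoot.mk_eq_mk] at hc
    simpa [hφa] using map_dvd (mapRingHom φ) hc
  · rintro ⟨c, hc⟩
    obtain ⟨h, rfl⟩ := map_surjective φ hφ c
    have hdvd : C a ∣ g - f * h := by
      rw [C_dvd_iff_dvd_coeff]
      intro i
      rw [← Ideal.mem_span_singleton, ← hker, RingHom.mem_ker, ← coeff_map]
      simp [hc]
    simpa using map_dvd (AdjoinRoot.mk f) hdvd

theorem isRadical_adjoinRoot_of [DecompositionMonoid B[X]] (hφ : Function.Surjective φ)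
    (hker : RingHom.ker φ = Ideal.span {a}) (hsq : Squarefree (f.map φ)) :
    IsRadical (AdjoinRoot.of f a) := by
  intro n x hx
  obtain ⟨g, rfl⟩ := AdjoinRoot.mk_surjective x
  rw [← map_pow, adjoinRoot_of_dvd_mk_iff hφ hker, Polynomial.map_pow] at hx
  exact (adjoinRoot_of_dvd_mk_iff hφ hker).mpr (hsq.isRadical n _ hx)

theorem adjoinRoot_of_ne_zero [IsDomain A] (hf : Irreducible f) (ha : Prime a) (hφa : φ a = 0)
    (hf0 : f.map φ ≠ 0) : AdjoinRoot.of f a ≠ 0 := by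
  rw [← AdjoinRoot.mk_C, Ne, AdjoinRoot.mk_eq_zero, (prime_C_iff.mpr ha).irreducible.dvd_iff]
  rintro (hunit | hassoc)
  · exact hf.not_isUnit hunit
  · obtain ⟨g, rfl⟩ := hassoc.dvd
    simp [hφa] at hf0

theorem squarefree_natCast_adjoinRoot {p : ℕ} [Fact p.Prime] {f : ℤ[X]} (hf : Irreducible f)
    (hsq : Squarefree (f.map (Int.castRingHom (ZMod p)))) :
    Squarefree (p : AdjoinRoot f) := by
  have : IsDomain (AdjoinRoot f) := AdjoinRoot.isDomain_of_prime hf.prime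
  have hne : AdjoinRoot.of f (p : ℤ) ≠ 0 :=
    adjoinRoot_of_ne_zero hf (Nat.prime_iff_prime_int.mp Fact.out)
      (φ := Int.castRingHom (ZMod p)) (by simp) hsq.ne_zero
  rw [← map_natCast (AdjoinRoot.of f)]
  exact (isRadical_adjoinRoot_of (ZMod.ringHom_surjective _) (ZMod.ker_intCastRingHom p)
    hsq).squarefree hne

theorem intCast_surjective_adjoinRoot_quotient_of_splits {p : ℕ} [Fact p.Prime] {f : ℤ[X]}
    (hsplit : (f.map (Int.castRingHom (ZMod p))).Splits)
    (hf0 : f.map (Int.castRingHom (ZMod p)) ≠ 0) {π : AdjoinRoot f} (hπ : Prime π)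
    (hdvd : π ∣ (p : AdjoinRoot f)) :
    Function.Surjective (Int.castRingHom (AdjoinRoot f ⧸ Ideal.span {π})) := by
  have : (Ideal.span {π}).IsPrime := (Ideal.span_singleton_prime hπ.ne_zero).mpr hπ
  have := charP_quotient_span_singleton Fact.out hπ.not_isUnit hdvd
  let ι := ZMod.castHom dvd_rfl (AdjoinRoot f ⧸ Ideal.span {π})
  let ζ := Ideal.Quotient.mk (Ideal.span {π}) (AdjoinRoot.root f)
  have hroot : ((f.map (Int.castRingHom (ZMod p))).map ι).IsRoot ζ := by
    rw [IsRoot, map_map, eval_map, Subsingleton.elim (ι.comp _)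
      ((Ideal.Quotient.mk (Ideal.span {π})).comp (AdjoinRoot.of f)), ← hom_eval₂,
      AdjoinRoot.eval₂_root, map_zero]
  obtain ⟨s, hs⟩ := hsplit.mem_range_of_isRoot hf0 hroot
  obtain ⟨r, rfl⟩ := ZMod.intCast_surjective s
  refine intCast_surjective_of_map_X_eq_intCast
    (ψ := (Ideal.Quotient.mk (Ideal.span {π})).comp (AdjoinRoot.mk f))
    (Ideal.Quotient.mk_surjective.comp AdjoinRoot.mk_surjective) (r := r) ?_
  rw [← map_intCast ι r, hs, RingHom.comp_apply, AdjoinRoot.mk_X]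

end ReductionModPrime

section Cyclotomic

variable {n p : ℕ} [Fact p.Prime]

theorem cyclotomic_dvd_X_pow_sub_X {R : Type*} [CommRing R] {q : ℕ} (hq : q ≠ 0)
    (hn : n ∣ q - 1) : cyclotomic n R ∣ X ^ q - X :=
  calc cyclotomic n R ∣ X ^ n - 1 := cyclotomic.dvd_X_pow_sub_one n R
    _ ∣ X ^ (q - 1) - 1 := by
      obtain ⟨d, hd⟩ := hn
      rw [hd, pow_mul]
      exact sub_one_dvd_pow_sub_one _ d
    _ ∣ X ^ q - X := ⟨X, by rw [sub_mul, one_mul, pow_sub_one_mul hq]⟩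

theorem splits_map_cyclotomic_zmod (hn : n ∣ p - 1) :
    ((cyclotomic n ℤ).map (Int.castRingHom (ZMod p))).Splits := by
  rw [map_cyclotomic_int]
  exact (GaloisField.splits_zmod_X_pow_sub_X p).of_dvd
    (FiniteField.X_pow_card_sub_X_ne_zero _ (Fact.out : p.Prime).one_lt)
    (cyclotomic_dvd_X_pow_sub_X (NeZero.ne p) hn)

theorem squarefree_map_cyclotomic_zmod (hn : n ∣ p - 1) :
    Squarefree ((cyclotomic n ℤ).map (Int.castRingHom (ZMod p))) := by
  rw [map_cyclotomic_int]
  exact (galois_poly_separable p p dvd_rfl).squarefree.squarefree_of_dvd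
    (cyclotomic_dvd_X_pow_sub_X (NeZero.ne p) hn)

end Cyclotomic

theorem eisenstein_quotient_split_prime_power_general {p : ℕ} [Fact p.Prime] {f : ℤ[X]}
    (hf : Irreducible f) (hsplit : (f.map (Int.castRingHom (ZMod p))).Splits)
    (hsq : Squarefree (f.map (Int.castRingHom (ZMod p)))) {π : AdjoinRoot f} (hπ : Prime π)
    (hdvd : π ∣ (p : AdjoinRoot f)) (k : ℕ) :
    Function.Surjective
      (Int.castRingHom (AdjoinRoot f ⧸ Ideal.span {π ^ k})) ∧
    RingHom.ker (Int.castRingHom (AdjoinRoot f ⧸ Ideal.span {π ^ k})) =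
      Ideal.span {((p : ℤ) ^ k)} ∧
    (∃ e : ZMod (p ^ k) ≃+* (AdjoinRoot f ⧸ Ideal.span {π ^ k}),
      ∀ a : ℤ, e (a : ZMod (p ^ k)) = ((a : AdjoinRoot f ⧸ Ideal.span {π ^ k}))) ∧
    AddSubgroup.zmultiples (1 : AdjoinRoot f ⧸ Ideal.span {π ^ k}) = ⊤ ∧
    Nat.card (AdjoinRoot f ⧸ Ideal.span {π ^ k}) = p ^ k := by
  have hp : p.Prime := Fact.out
  have : IsDomain (AdjoinRoot f) := AdjoinRoot.isDomain_of_prime hf.prime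
  have hres := intCast_surjective_adjoinRoot_quotient_of_splits hsplit hsq.ne_zero hπ hdvd
  obtain ⟨σ, hσ⟩ := hdvd
  have hπσ : ¬π ∣ σ := fun h ↦
    hπ.not_isUnit (squarefree_natCast_adjoinRoot hf hsq π (hσ ▸ mul_dvd_mul_left π h))
  have hsurj := intCast_surjective_quotient_span_pow hσ
    (isCoprime_of_intCast_surjective hp ⟨σ, hσ⟩ hπσ hres) hres k
  have hker := ker_intCastRingHom_quotient_span_pow hp hπ hσ hπσ k
  obtain ⟨e, he⟩ := exists_zmod_ringEquiv_of_surjective_of_ker_eq hsurj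
    (hker.trans (by rw [Nat.cast_pow]))
  exact ⟨hsurj, hker, ⟨e, he⟩, zmultiples_one_eq_top_of_intCast_surjective hsurj,
    (Nat.card_congr e.toEquiv).symm.trans (Nat.card_zmod _)⟩

/-- for a rational prime `p ≡ 1 (mod 6)`, a prime `π ∈ ℤ[ζ]` dividing `p`,
and `k ≥ 1`, the canonical ring homomorphism `ℤ → ℤ[ζ]/(π^k)` is surjective with kernel
`p^k ℤ`, inducing a ring isomorphism `ZMod (p^k) ≃ ℤ[ζ]/(π^k)`; in particular the
additive group of `ℤ[ζ]/(π^k)` is cyclic of order `p^k`, generated by the class of `1`. -/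
theorem eisenstein_quotient_split_prime_power (p k : ℕ) (hp : p.Prime) (hp6 : p % 6 = 1)
    (π : Eisenstein) (hπ : Prime π) (hdvd : π ∣ (p : Eisenstein)) (hk : 1 ≤ k) :
    Function.Surjective
      (Int.castRingHom (Eisenstein ⧸ Ideal.span {π ^ k})) ∧
    RingHom.ker (Int.castRingHom (Eisenstein ⧸ Ideal.span {π ^ k})) =
      Ideal.span {((p : ℤ) ^ k)} ∧
    (∃ e : ZMod (p ^ k) ≃+* (Eisenstein ⧸ Ideal.span {π ^ k}),
      ∀ a : ℤ, e (a : ZMod (p ^ k)) = ((a : Eisenstein ⧸ Ideal.span {π ^ k}))) ∧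
    AddSubgroup.zmultiples (1 : Eisenstein ⧸ Ideal.span {π ^ k}) = ⊤ ∧
    Nat.card (Eisenstein ⧸ Ideal.span {π ^ k}) = p ^ k := by
  have : Fact p.Prime := ⟨hp⟩
  have h3 : 3 ∣ p - 1 := by omega
  exact eisenstein_quotient_split_prime_power_general
    (cyclotomic_three ℤ ▸ cyclotomic.irreducible three_pos)
    (cyclotomic_three ℤ ▸ splits_map_cyclotomic_zmod h3)
    (cyclotomic_three ℤ ▸ squarefree_map_cyclotomic_zmod h3) hπ hdvd k
end

section
/- Let k ≥ 1. Then the map (a, b) ↦ a·1 + b·i induces an isomorphism of additive groups ZMod (2^k) × ZMod (2^k) ≃ ℤ[i]/((1+i)^{2k}); in particular the additive group of ℤ[i]/((1+i)^{2k}) is generated by the classes of 1 and i and is isomorphic to ℤ/2^kℤ ⊕ ℤ/2^kℤ. -/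
local notation "ℤ[i]" => GaussianInt

/-- The imaginary unit in the Gaussian integers. -/
def gi : ℤ[i] := ⟨0, 1⟩

/-! Since `(1 + i)² = 2i` is an associate of `2`, the ideal `((1 + i)^(2k))` equals `(2^k)`; and a
rational integer divides `a + bi` exactly when it divides both `a` and `b`, so modulo `(2^k)` the
two coordinates are reduced independently. -/

section QuotientByNat

variable (d : ℤ) (n : ℕ)

/-- Coordinatewise reduction modulo `n` of `ℤ[√d]`, used to identify the additive group of
`ℤ[√d] / (n)`. It is bundled as an additive map only: it does not respect the componentwise
product of `ZMod n × ZMod n`. -/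
def reImMod : ℤ√d →+ ZMod n × ZMod n where
  toFun z := (z.re, z.im)
  map_zero' := by simp
  map_add' z w := by simp

theorem reImMod_surjective : Function.Surjective (reImMod d n) := by
  rintro ⟨x, y⟩
  obtain ⟨a, rfl⟩ := ZMod.intCast_surjective x
  obtain ⟨b, rfl⟩ := ZMod.intCast_surjective y
  exact ⟨⟨a, b⟩, rfl⟩

theorem ker_reImMod :
    (reImMod d n).ker = (Ideal.span {(n : ℤ√d)}).toAddSubgroup := by
  ext z
  calc z ∈ (reImMod d n).ker
    _ ↔ (n : ℤ) ∣ z.re ∧ (n : ℤ) ∣ z.im := by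
      simp only [AddMonoidHom.mem_ker, reImMod, AddMonoidHom.coe_mk, ZeroHom.coe_mk,
        Prod.mk_eq_zero, ZMod.intCast_zmod_eq_zero_iff_dvd]
    _ ↔ (n : ℤ√d) ∣ z := by
      rw [← Zsqrtd.intCast_dvd, Int.cast_natCast]
    _ ↔ z ∈ Ideal.span {(n : ℤ√d)} := Ideal.mem_span_singleton.symm

/-- The identification of the additive group of `ℤ[√d] / (n)` with `ℤ/n ⊕ ℤ/n` in the coordinates
given by `1, √d`. -/
noncomputable def quotientSpanNatCastAddEquiv :
    (ℤ√d ⧸ Ideal.span {(n : ℤ√d)}) ≃+ ZMod n × ZMod n :=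
  (QuotientAddGroup.quotientAddEquivOfEq (ker_reImMod d n).symm).trans
    (QuotientAddGroup.quotientKerEquivOfSurjective (reImMod d n) (reImMod_surjective d n))

theorem quotientSpanNatCastAddEquiv_mk (z : ℤ√d) :
    quotientSpanNatCastAddEquiv d n (Ideal.Quotient.mk _ z) = ((z.re : ZMod n), (z.im : ZMod n)) :=
  rfl

end QuotientByNat

theorem isUnit_gi : IsUnit gi :=
  IsUnit.of_mul_eq_one (-gi) (by ext <;> simp [gi])

theorem one_add_gi_sq : (1 + gi) ^ 2 = 2 * gi := by
  ext <;> simp [gi, sq]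

theorem associated_one_add_gi_sq_two : Associated ((1 + gi) ^ 2) 2 := by
  rw [one_add_gi_sq]
  exact associated_mul_unit_left 2 gi isUnit_gi

theorem span_one_add_gi_pow_two_mul (k : ℕ) :
    Ideal.span {(1 + gi) ^ (2 * k)} = Ideal.span {((2 ^ k : ℕ) : ℤ[i])} := by
  rw [Ideal.span_singleton_eq_span_singleton, pow_mul, Nat.cast_pow, Nat.cast_ofNat]
  exact associated_one_add_gi_sq_two.pow_pow

theorem intCast_mul_one_add_intCast_mul_gi (a b : ℤ) :
    (a : ℤ[i]) * 1 + (b : ℤ[i]) * gi = ⟨a, b⟩ := by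
  ext <;> simp [gi]

/-- for `k ≥ 1`, the map `(a, b) ↦ a·1 + b·i` induces an additive-group
isomorphism `ZMod (2^k) × ZMod (2^k) ≃ ℤ[i]/((1+i)^(2k))`. -/
theorem gaussian_quotient_even_power_of_one_add_i (k : ℕ) (hk : 1 ≤ k) :
    ∃ e : (ZMod (2 ^ k) × ZMod (2 ^ k)) ≃+
        (ℤ[i] ⧸ Ideal.span {((1 + gi) ^ (2 * k))}),
      ∀ a b : ℤ,
        e ((a : ZMod (2 ^ k)), (b : ZMod (2 ^ k))) =
          Ideal.Quotient.mk (Ideal.span {((1 + gi) ^ (2 * k))})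
            ((a : ℤ[i]) * 1 + (b : ℤ[i]) * gi) := by
  rw [span_one_add_gi_pow_two_mul]
  refine ⟨(quotientSpanNatCastAddEquiv (-1) (2 ^ k)).symm, fun a b => ?_⟩
  rw [AddEquiv.symm_apply_eq, quotientSpanNatCastAddEquiv_mk, intCast_mul_one_add_intCast_mul_gi]
end

section
/- Let k ≥ 1. Then the map (a, b) ↦ a·(1−i) + b·i induces an isomorphism of additive groups ZMod (2^{k−1}) × ZMod (2^k) ≃ ℤ[i]/((1+i)^{2k−1}); in particular the additive group of ℤ[i]/((1+i)^{2k−1}) is generated by the classes of 1−i and i and is isomorphic to ℤ/2^{k−1}ℤ ⊕ ℤ/2^kℤ. -/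
/-!
Multiplication by `1 + i` sends `x + yi` to `(x - y)(1 - i) + 2x·i`, and `(x - y, x)` runs through
all of `ℤ × ℤ`. Hence, in the `ℤ`-basis `(1 - i, i)` of `ℤ[i]`, the ideal generated by `m(1 + i)` is
exactly `mℤ × 2mℤ`. Since `(1 + i)² = 2i` with `i` a unit, `(1 + i)^(2n+1)` is associated to
`2ⁿ(1 + i)`, which is the case `m = 2ⁿ`.
-/

local notation "ℤ[i]" => GaussianInt

theorem exists_addEquiv_of_ker_eq {A B C : Type*} [AddGroup A] [AddGroup B] [AddGroup C]
    {f : A →+ B} {g : A →+ C} (hf : Function.Surjective f) (hg : Function.Surjective g)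
    (hker : f.ker = g.ker) : ∃ e : B ≃+ C, ∀ x, e (f x) = g x := by
  let ef := QuotientAddGroup.quotientKerEquivOfSurjective f hf
  let eg := QuotientAddGroup.quotientKerEquivOfSurjective g hg
  refine ⟨ef.symm.trans ((QuotientAddGroup.quotientAddEquivOfEq hker).trans eg), fun x => ?_⟩
  have hx : ef.symm (f x) = (x : A ⧸ f.ker) := ef.symm_apply_eq.2 rfl
  rw [AddEquiv.trans_apply, hx]
  rfl

theorem exists_zmod_prod_addEquiv {B : Type*} [AddGroup B] {m n : ℕ} {f : ℤ × ℤ →+ B}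
    (hf : Function.Surjective f)
    (hker : ∀ a b : ℤ, f (a, b) = 0 ↔ (m : ℤ) ∣ a ∧ (n : ℤ) ∣ b) :
    ∃ e : ZMod m × ZMod n ≃+ B, ∀ a b : ℤ, e (a, b) = f (a, b) := by
  let r : ℤ × ℤ →+ ZMod m × ZMod n :=
    (Int.castAddHom (ZMod m)).prodMap (Int.castAddHom (ZMod n))
  have hr : Function.Surjective r := ZMod.intCast_surjective.prodMap ZMod.intCast_surjective
  have hrf : r.ker = f.ker := by
    ext ⟨a, b⟩
    simp [r, AddMonoidHom.mem_ker, hker, ZMod.intCast_zmod_eq_zero_iff_dvd]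
  obtain ⟨e, he⟩ := exists_addEquiv_of_ker_eq hr hf hrf
  exact ⟨e, fun a b => he (a, b)⟩

/-- The additive isomorphism `ℤ × ℤ ≃+ ℤ[i]` given by the `ℤ`-basis `(1 - i, i)` of `ℤ[i]`, in which
the ideals `(m(1 + i))` are diagonal. -/
def oneSubIBasisEquiv : ℤ × ℤ ≃+ ℤ[i] where
  toFun p := p.1 * (1 - gi) + p.2 * gi
  invFun z := (z.re, z.re + z.im)
  left_inv p := by ext <;> simp [gi]
  right_inv z := by ext <;> simp [gi]
  map_add' p q := by push_cast [Prod.fst_add, Prod.snd_add]; ring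

theorem oneSubIBasisEquiv_apply (a b : ℤ) :
    oneSubIBasisEquiv (a, b) = a * (1 - gi) + b * gi := rfl

theorem intCast_mul_one_add_gi_mul (m : ℤ) (z : ℤ[i]) :
    m * (1 + gi) * z = oneSubIBasisEquiv (m * (z.re - z.im), 2 * m * z.re) := by
  rw [oneSubIBasisEquiv_apply]
  ext <;> simp [gi] <;> ring

theorem intCast_mul_one_add_gi_dvd_oneSubIBasisEquiv_iff (m a b : ℤ) :
    m * (1 + gi) ∣ oneSubIBasisEquiv (a, b) ↔ m ∣ a ∧ 2 * m ∣ b := by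
  constructor
  · rintro ⟨z, hz⟩
    rw [intCast_mul_one_add_gi_mul, oneSubIBasisEquiv.injective.eq_iff, Prod.mk.injEq] at hz
    exact ⟨⟨_, hz.1⟩, ⟨_, hz.2⟩⟩
  · rintro ⟨⟨s, rfl⟩, ⟨t, rfl⟩⟩
    refine ⟨⟨t, t - s⟩, ?_⟩
    rw [intCast_mul_one_add_gi_mul, sub_sub_cancel]

theorem associated_one_add_gi_pow_odd (n : ℕ) :
    Associated ((1 + gi) ^ (2 * n + 1)) (2 ^ n * (1 + gi)) := by
  rw [pow_succ, pow_mul, one_add_gi_sq, mul_pow]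
  exact (associated_mul_unit_left _ _ (isUnit_gi.pow n)).mul_right _

theorem gaussian_quotient_odd_power_of_one_add_i_general (m : ℕ) {z : ℤ[i]}
    (hz : Associated z (m * (1 + gi))) :
    ∃ e : (ZMod m × ZMod (2 * m)) ≃+ (ℤ[i] ⧸ Ideal.span {z}),
      ∀ a b : ℤ, e (a, b) = Ideal.Quotient.mk (Ideal.span {z}) (a * (1 - gi) + b * gi) := by
  let π := (Ideal.Quotient.mk (Ideal.span {z})).toAddMonoidHom
  refine exists_zmod_prod_addEquiv (f := π.comp oneSubIBasisEquiv.toAddMonoidHom)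
    (Ideal.Quotient.mk_surjective.comp oneSubIBasisEquiv.surjective) fun a b => ?_
  calc Ideal.Quotient.mk (Ideal.span {z}) (oneSubIBasisEquiv (a, b)) = 0
      ↔ z ∣ oneSubIBasisEquiv (a, b) := Ideal.Quotient.eq_zero_iff_dvd _ _
    _ ↔ ((m : ℤ) : ℤ[i]) * (1 + gi) ∣ oneSubIBasisEquiv (a, b) := by
      rw [Int.cast_natCast, hz.dvd_iff_dvd_left]
    _ ↔ (m : ℤ) ∣ a ∧ ((2 * m : ℕ) : ℤ) ∣ b := by
      rw [intCast_mul_one_add_gi_dvd_oneSubIBasisEquiv_iff,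
        Nat.cast_mul, Nat.cast_ofNat]

/-- for `k ≥ 1`, the map `(a, b) ↦ a·(1−i) + b·i` induces an additive-group
isomorphism `ZMod (2^(k-1)) × ZMod (2^k) ≃ ℤ[i]/((1+i)^(2k-1))`. -/
theorem gaussian_quotient_odd_power_of_one_add_i (k : ℕ) (hk : 1 ≤ k) :
    ∃ e : (ZMod (2 ^ (k - 1)) × ZMod (2 ^ k)) ≃+
        (ℤ[i] ⧸ Ideal.span {((1 + gi) ^ (2 * k - 1))}),
      ∀ a b : ℤ,
        e ((a : ZMod (2 ^ (k - 1))), (b : ZMod (2 ^ k))) =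
          Ideal.Quotient.mk (Ideal.span {((1 + gi) ^ (2 * k - 1))})
            ((a : ℤ[i]) * (1 - gi) + (b : ℤ[i]) * gi) := by
  obtain ⟨n, rfl⟩ := Nat.exists_eq_add_of_le' hk
  rw [Nat.add_sub_cancel, Nat.pow_succ', show 2 * (n + 1) - 1 = 2 * n + 1 by omega]
  exact gaussian_quotient_odd_power_of_one_add_i_general (2 ^ n)
    (mod_cast associated_one_add_gi_pow_odd n)
end

section
/- Let k ≥ 1. Then the map (a, b) ↦ a·1 + b·ζ induces an isomorphism of additive groups ZMod (3^k) × ZMod (3^k) ≃ ℤ[ζ]/((1−ζ)^{2k}); in particular the additive group of ℤ[ζ]/((1−ζ)^{2k}) is generated by the classes of 1 and ζ and is isomorphic to ℤ/3^kℤ ⊕ ℤ/3^kℤ. -/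
open Polynomial

/-- The distinguished primitive cube root of unity in the Eisenstein integers. -/
noncomputable def ζ : Eisenstein := AdjoinRoot.root (X ^ 2 + X + 1 : ℤ[X])

/-!
Since `(1 - ζ) ^ 2 = -3 * ζ` and `ζ` is a unit, the ideal generated by `(1 - ζ) ^ (2 * k)` is
generated by the integer `3 ^ k`. An element is divisible by an integer `n` exactly when its
coordinates in the basis `1, ζ` are, so reducing coordinates modulo `n` identifies the quotient by
`n` with pairs of residues modulo `n`.
-/

open Module

theorem exists_smul_eq_iff_forall_dvd_repr {ι R M : Type*} [Finite ι] [Semiring R]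
    [AddCommMonoid M] [Module R M] (b : Basis ι R M) {r : R} {x : M} :
    (∃ y, r • y = x) ↔ ∀ i, r ∣ b.repr x i := by
  constructor
  · rintro ⟨y, rfl⟩ i
    simp only [map_smul, Finsupp.smul_apply, smul_eq_mul, dvd_mul_right]
  · intro hdvd
    choose c hc using hdvd
    refine ⟨b.equivFun.symm c, b.ext_elem fun i ↦ ?_⟩
    rw [map_smul, Finsupp.smul_apply, smul_eq_mul, ← b.equivFun_apply,
      LinearEquiv.apply_symm_apply, hc]

section ReprMod

variable {ι A : Type*} [Finite ι]

/-- Reduction modulo `n` of the coordinates in a `ℤ`-basis. -/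
noncomputable def reprMod [AddCommGroup A] (b : Basis ι ℤ A) (n : ℕ) : A →ₗ[ℤ] (ι → ZMod n) :=
  (Int.castAddHom (ZMod n)).toIntLinearMap.compLeft ι ∘ₗ b.equivFun.toLinearMap

theorem reprMod_apply [AddCommGroup A] (b : Basis ι ℤ A) (n : ℕ) (x : A) (i : ι) :
    reprMod b n x i = (b.repr x i : ZMod n) :=
  rfl

theorem reprMod_surjective [AddCommGroup A] (b : Basis ι ℤ A) (n : ℕ) :
    Function.Surjective (reprMod b n) :=
  (ZMod.intCast_surjective.comp_left).comp b.equivFun.surjective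

variable [CommRing A] (b : Basis ι ℤ A) (n : ℕ)

theorem restrictScalars_span_natCast_eq_ker_reprMod :
    (Ideal.span {(n : A)}).restrictScalars ℤ = LinearMap.ker (reprMod b n) := by
  ext x
  calc x ∈ Ideal.span {(n : A)}
    _ ↔ ∃ y, (n : ℤ) • y = x := by
      simp only [Ideal.mem_span_singleton, dvd_def, zsmul_eq_mul, Int.cast_natCast, eq_comm]
    _ ↔ ∀ i, (n : ℤ) ∣ b.repr x i := exists_smul_eq_iff_forall_dvd_repr b
    _ ↔ reprMod b n x = 0 := by
      simp only [funext_iff, reprMod_apply, Pi.zero_apply, ZMod.intCast_zmod_eq_zero_iff_dvd]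

/-- The isomorphism from the quotient of a ring by the ideal generated by `n` to tuples of residues
modulo `n`, given by the coordinates in a `ℤ`-basis of the ring. -/
noncomputable def quotientSpanNatCastEquiv : (A ⧸ Ideal.span {(n : A)}) ≃ₗ[ℤ] (ι → ZMod n) :=
  (Submodule.Quotient.restrictScalarsEquiv ℤ (Ideal.span {(n : A)})).symm ≪≫ₗ
    Submodule.quotEquivOfEq _ _ (restrictScalars_span_natCast_eq_ker_reprMod b n) ≪≫ₗ
    (reprMod b n).quotKerEquivOfSurjective (reprMod_surjective b n)

theorem quotientSpanNatCastEquiv_mk (x : A) :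
    quotientSpanNatCastEquiv b n (Ideal.Quotient.mk _ x) = reprMod b n x :=
  rfl

end ReprMod

theorem associated_one_sub_sq_three {R : Type*} [CommRing R] {z : R} (hz : z ^ 2 + z + 1 = 0) :
    Associated ((1 - z) ^ 2) 3 := by
  have isUnit_neg : IsUnit (-z) := .of_mul_eq_one (-z ^ 2) (by linear_combination (z - 1) * hz)
  have one_sub_sq : (1 - z) ^ 2 = 3 * -z := by linear_combination hz
  rw [one_sub_sq]
  exact associated_mul_unit_left 3 (-z) isUnit_neg

theorem span_singleton_eq_of_associated {R : Type*} [CommSemiring R] {x y : R}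
    (h : Associated x y) : Ideal.span {x} = Ideal.span {y} :=
  le_antisymm (Ideal.span_singleton_le_span_singleton.mpr h.symm.dvd)
    (Ideal.span_singleton_le_span_singleton.mpr h.dvd)

namespace Eisenstein

theorem zeta_sq_add_zeta_add_one : ζ ^ 2 + ζ + 1 = 0 :=
  AdjoinRoot.mk_self (f := (X ^ 2 + X + 1 : ℤ[X]))

theorem span_one_sub_zeta_pow_two_mul (k : ℕ) :
    Ideal.span {(1 - ζ) ^ (2 * k)} = Ideal.span {((3 ^ k : ℕ) : Eisenstein)} := by
  rw [pow_mul, Nat.cast_pow, Nat.cast_ofNat]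
  exact span_singleton_eq_of_associated
    ((associated_one_sub_sq_three zeta_sq_add_zeta_add_one).pow_pow)

theorem monic_X_sq_add_X_add_one : (X ^ 2 + X + 1 : ℤ[X]).Monic := by
  monicity!

theorem natDegree_X_sq_add_X_add_one : (X ^ 2 + X + 1 : ℤ[X]).natDegree = 2 := by
  compute_degree!

/-- The `ℤ`-basis `1, ζ` of the Eisenstein integers. -/
noncomputable def basis : Basis (Fin 2) ℤ Eisenstein :=
  (AdjoinRoot.powerBasis' monic_X_sq_add_X_add_one).basis.reindex
    (finCongr natDegree_X_sq_add_X_add_one)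

theorem basis_apply (i : Fin 2) : basis i = ζ ^ (i : ℕ) := by
  rw [basis, Basis.reindex_apply, PowerBasis.basis_eq_pow, AdjoinRoot.powerBasis'_gen]
  rfl

theorem repr_intCast_add_intCast_mul_zeta (a b : ℤ) :
    ⇑(basis.repr ((a : Eisenstein) * 1 + (b : Eisenstein) * ζ)) = ![a, b] := by
  have hsum : (a : Eisenstein) * 1 + (b : Eisenstein) * ζ = basis.equivFun.symm ![a, b] := by
    simp [Basis.equivFun_symm_apply, basis_apply]
  rw [hsum, ← Basis.equivFun_apply, LinearEquiv.apply_symm_apply]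

end Eisenstein

/-- for `k ≥ 1`, the map `(a, b) ↦ a·1 + b·ζ` induces an additive-group
isomorphism `ZMod (3^k) × ZMod (3^k) ≃ ℤ[ζ]/((1−ζ)^(2k))`. -/
theorem eisenstein_quotient_even_power_of_one_sub_zeta (k : ℕ) (hk : 1 ≤ k) :
    ∃ e : (ZMod (3 ^ k) × ZMod (3 ^ k)) ≃+
        (Eisenstein ⧸ Ideal.span {((1 - ζ) ^ (2 * k))}),
      ∀ a b : ℤ,
        e ((a : ZMod (3 ^ k)), (b : ZMod (3 ^ k))) =
          Ideal.Quotient.mk (Ideal.span {((1 - ζ) ^ (2 * k))})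
            ((a : Eisenstein) * 1 + (b : Eisenstein) * ζ) := by
  rw [Eisenstein.span_one_sub_zeta_pow_two_mul]
  let coords := quotientSpanNatCastEquiv Eisenstein.basis (3 ^ k) ≪≫ₗ
    LinearEquiv.finTwoArrow ℤ (ZMod (3 ^ k))
  have coords_mk (x : Eisenstein) : coords (Ideal.Quotient.mk _ x) =
      ((Eisenstein.basis.repr x 0 : ZMod (3 ^ k)), (Eisenstein.basis.repr x 1 : ZMod (3 ^ k))) := by
    simp only [coords, LinearEquiv.trans_apply, quotientSpanNatCastEquiv_mk,
      LinearEquiv.finTwoArrow_apply, reprMod_apply]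
  refine ⟨coords.symm.toAddEquiv, fun a b ↦ coords.symm_apply_eq.mpr ?_⟩
  rw [coords_mk, Eisenstein.repr_intCast_add_intCast_mul_zeta]
  rfl
end

section
/- Let k ≥ 1. Then the map (a, b) ↦ a·(1−ζ) + b·ζ induces an isomorphism of additive groups ZMod (3^{k−1}) × ZMod (3^k) ≃ ℤ[ζ]/((1−ζ)^{2k−1}); in particular the additive group of ℤ[ζ]/((1−ζ)^{2k−1}) is isomorphic to ℤ/3^{k−1}ℤ ⊕ ℤ/3^kℤ. -/
open Polynomial

/-!
The elements `1 - ζ` and `ζ` form a `ℤ`-basis of `ℤ[ζ]`. Since `(1 - ζ) ^ 2 = 3 * -ζ` with `-ζ` a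
unit, `(1 - ζ) ^ (2 * m + 1)` and `3 ^ m * (1 - ζ)` generate the same ideal. Multiplication by
`1 - ζ` sends `c * (1 - ζ) + d * ζ` to `d * (1 - ζ) + 3 * (d - c) * ζ`, so this ideal consists of
the elements `a * (1 - ζ) + b * ζ` with `3 ^ m ∣ a` and `3 ^ (m + 1) ∣ b`.
-/

section ZModProd

variable {A : Type*} [AddCommGroup A] {m n : ℕ} {x y : A}

/-- The homomorphism `(a, b) ↦ a • x + b • y` from `ZMod m × ZMod n`, for elements `x` and `y`
of an additive group killed by `m` and `n` respectively. -/
def zmodProdLift (hx : m • x = 0) (hy : n • y = 0) : ZMod m × ZMod n →+ A :=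
  (ZMod.lift m ⟨zmultiplesHom A x, by simpa using hx⟩).coprod
    (ZMod.lift n ⟨zmultiplesHom A y, by simpa using hy⟩)

theorem zmodProdLift_intCast (hx : m • x = 0) (hy : n • y = 0) (a b : ℤ) :
    zmodProdLift hx hy (a, b) = a • x + b • y := by
  simp [zmodProdLift]

theorem zmodProdLift_surjective (hx : m • x = 0) (hy : n • y = 0)
    (hspan : Submodule.span ℤ {x, y} = ⊤) : Function.Surjective (zmodProdLift hx hy) := by
  intro z
  obtain ⟨a, b, rfl⟩ := Submodule.mem_span_pair.1 (hspan ▸ Submodule.mem_top : z ∈ _)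
  exact ⟨(a, b), zmodProdLift_intCast hx hy a b⟩

theorem zmodProdLift_injective (hx : m • x = 0) (hy : n • y = 0)
    (hrel : ∀ a b : ℤ, a • x + b • y = 0 → (m : ℤ) ∣ a ∧ (n : ℤ) ∣ b) :
    Function.Injective (zmodProdLift hx hy) := by
  rw [injective_iff_map_eq_zero]
  rintro ⟨a, b⟩ h
  obtain ⟨a, rfl⟩ := ZMod.intCast_surjective a
  obtain ⟨b, rfl⟩ := ZMod.intCast_surjective b
  rw [zmodProdLift_intCast] at h
  simpa only [Prod.mk_eq_zero, ZMod.intCast_zmod_eq_zero_iff_dvd] using hrel a b h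

theorem exists_zmod_prod_addEquiv_s7 (hspan : Submodule.span ℤ {x, y} = ⊤)
    (hrel : ∀ a b : ℤ, a • x + b • y = 0 ↔ (m : ℤ) ∣ a ∧ (n : ℤ) ∣ b) :
    ∃ e : ZMod m × ZMod n ≃+ A, ∀ a b : ℤ, e (a, b) = a • x + b • y := by
  have hx : m • x = 0 := by simpa using (hrel m 0).2 (by simp)
  have hy : n • y = 0 := by simpa using (hrel 0 n).2 (by simp)
  exact ⟨AddEquiv.ofBijective (zmodProdLift hx hy)
    ⟨zmodProdLift_injective hx hy fun a b ↦ (hrel a b).1, zmodProdLift_surjective hx hy hspan⟩,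
    zmodProdLift_intCast hx hy⟩

end ZModProd

section PowerBasisDimTwo

variable {R S : Type*} [CommRing R] [Ring S] [Algebra R S]

theorem coe_powerBasis_reindex_eq_one_gen (pb : PowerBasis R S) (h : pb.dim = 2) :
    ⇑(pb.basis.reindex (finCongr h)) = ![1, pb.gen] := by
  ext i
  fin_cases i <;> simp

theorem linearIndependent_one_powerBasis_gen (pb : PowerBasis R S) (h : pb.dim = 2) :
    LinearIndependent R ![1, pb.gen] :=
  coe_powerBasis_reindex_eq_one_gen pb h ▸ (pb.basis.reindex (finCongr h)).linearIndependent

theorem span_one_powerBasis_gen (pb : PowerBasis R S) (h : pb.dim = 2) :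
    Submodule.span R {1, pb.gen} = ⊤ := by
  rw [← (pb.basis.reindex (finCongr h)).span_eq, coe_powerBasis_reindex_eq_one_gen,
    Matrix.range_cons_cons_empty]

end PowerBasisDimTwo

section SpanPair

variable {R M N : Type*} [Ring R] [AddCommGroup M] [Module R M]

theorem span_pair_add_left (x y : M) :
    Submodule.span R {x + y, y} = Submodule.span R {x, y} := by
  apply le_antisymm <;> refine Submodule.span_le.2 (Set.pair_subset ?_ ?_)
  · exact Submodule.mem_span_pair.2 ⟨1, 1, by simp⟩
  · exact Submodule.mem_span_of_mem (by simp)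
  · exact Submodule.mem_span_pair.2 ⟨1, -1, by simp⟩
  · exact Submodule.mem_span_of_mem (by simp)

theorem span_pair_apply_eq_top [AddCommGroup N] [Module R N] {f : M →ₗ[R] N}
    (hf : Function.Surjective f) {x y : M} (hspan : Submodule.span R {x, y} = ⊤) :
    Submodule.span R {f x, f y} = ⊤ := by
  rw [← Set.image_pair, ← Submodule.map_span, hspan, Submodule.map_top, LinearMap.range_eq_top.2 hf]

end SpanPair

section CubeRoot

variable {S : Type*} [CommRing S] {ω : S}

theorem associated_one_sub_sq_three_s7 (hω : ω ^ 2 + ω + 1 = 0) : Associated ((1 - ω) ^ 2) 3 := by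
  have hunit : IsUnit (-ω) := .of_mul_eq_one (ω + 1) (by linear_combination -hω)
  have hsq : (1 - ω) ^ 2 = 3 * -ω := by linear_combination hω
  exact hsq ▸ associated_mul_unit_left 3 (-ω) hunit

theorem associated_one_sub_pow_two_mul_add_one (hω : ω ^ 2 + ω + 1 = 0) (m : ℕ) :
    Associated ((1 - ω) ^ (2 * m + 1)) (3 ^ m * (1 - ω)) := by
  rw [pow_succ, pow_mul]
  exact (associated_one_sub_sq_three_s7 hω).pow_pow.mul_right (1 - ω)

variable {R : Type*} [CommRing R] [Algebra R S]

theorem one_sub_mul_smul_add_smul (hω : ω ^ 2 + ω + 1 = 0) (c d : R) :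
    (1 - ω) * (c • (1 - ω) + d • ω) = d • (1 - ω) + (3 * (d - c)) • ω := by
  simp only [Algebra.smul_def, map_mul, map_sub, map_ofNat]
  linear_combination (algebraMap R S c - algebraMap R S d) * hω

theorem smul_one_sub_dvd_smul_add_smul_iff (hω : ω ^ 2 + ω + 1 = 0)
    (hindep : LinearIndependent R ![1 - ω, ω]) (hspan : Submodule.span R {1 - ω, ω} = ⊤)
    (n a b : R) :
    n • (1 - ω) ∣ a • (1 - ω) + b • ω ↔ n ∣ a ∧ 3 * n ∣ b := by
  have hmul (c d : R) : n • (1 - ω) * (c • (1 - ω) + d • ω) =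
      (n * d) • (1 - ω) + (3 * n * (d - c)) • ω := by
    rw [smul_mul_assoc, one_sub_mul_smul_add_smul hω]
    module
  constructor
  · rintro ⟨w, hw⟩
    obtain ⟨c, d, rfl⟩ := Submodule.mem_span_pair.1 (hspan ▸ Submodule.mem_top : w ∈ _)
    rw [hmul] at hw
    obtain ⟨ha, hb⟩ := hindep.eq_of_pair hw
    exact ⟨⟨d, ha⟩, ⟨d - c, hb⟩⟩
  · rintro ⟨⟨d, rfl⟩, ⟨e, rfl⟩⟩
    exact ⟨(d - e) • (1 - ω) + d • ω, by rw [hmul, sub_sub_cancel]⟩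

end CubeRoot

theorem zeta_sq_add_zeta_add_one : ζ ^ 2 + ζ + 1 = 0 :=
  AdjoinRoot.mk_self (f := (X ^ 2 + X + 1 : ℤ[X]))

theorem monic_X_sq_add_X_add_one : (X ^ 2 + X + 1 : ℤ[X]).Monic := by monicity!

/-- The `ℤ`-basis `1, ζ` of the Eisenstein integers. -/
noncomputable def zetaPowerBasis : PowerBasis ℤ Eisenstein :=
  AdjoinRoot.powerBasis' monic_X_sq_add_X_add_one

theorem zetaPowerBasis_dim : zetaPowerBasis.dim = 2 :=
  show (X ^ 2 + X + 1 : ℤ[X]).natDegree = 2 by compute_degree!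

theorem linearIndependent_one_sub_zeta_zeta : LinearIndependent ℤ ![1 - ζ, ζ] := by
  rw [← LinearIndependent.pair_add_left_iff, sub_add_cancel]
  exact linearIndependent_one_powerBasis_gen zetaPowerBasis zetaPowerBasis_dim

theorem span_one_sub_zeta_zeta : Submodule.span ℤ {1 - ζ, ζ} = ⊤ := by
  rw [← span_pair_add_left, sub_add_cancel]
  exact span_one_powerBasis_gen zetaPowerBasis zetaPowerBasis_dim

theorem smul_add_smul_mem_span_one_sub_zeta_pow_iff (m : ℕ) (a b : ℤ) :
    a • (1 - ζ) + b • ζ ∈ Ideal.span {(1 - ζ) ^ (2 * m + 1)} ↔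
      3 ^ m ∣ a ∧ 3 ^ (m + 1) ∣ b := by
  have hassoc : Associated ((1 - ζ) ^ (2 * m + 1)) ((3 ^ m : ℤ) • (1 - ζ)) := by
    simpa using associated_one_sub_pow_two_mul_add_one zeta_sq_add_zeta_add_one m
  rw [Ideal.mem_span_singleton, hassoc.dvd_iff_dvd_left, pow_succ' (3 : ℤ)]
  exact smul_one_sub_dvd_smul_add_smul_iff zeta_sq_add_zeta_add_one
    linearIndependent_one_sub_zeta_zeta span_one_sub_zeta_zeta (3 ^ m) a b

/-- for `k ≥ 1`, the map `(a, b) ↦ a·(1−ζ) + b·ζ` induces an additive-group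
isomorphism `ZMod (3^(k-1)) × ZMod (3^k) ≃ ℤ[ζ]/((1−ζ)^(2k-1))`. -/
theorem eisenstein_quotient_odd_power_of_one_sub_zeta (k : ℕ) (hk : 1 ≤ k) :
    ∃ e : (ZMod (3 ^ (k - 1)) × ZMod (3 ^ k)) ≃+
        (Eisenstein ⧸ Ideal.span {((1 - ζ) ^ (2 * k - 1))}),
      ∀ a b : ℤ,
        e ((a : ZMod (3 ^ (k - 1))), (b : ZMod (3 ^ k))) =
          Ideal.Quotient.mk (Ideal.span {((1 - ζ) ^ (2 * k - 1))})
            ((a : Eisenstein) * (1 - ζ) + (b : Eisenstein) * ζ) := by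
  obtain ⟨m, rfl⟩ := Nat.exists_eq_add_of_le' hk
  rw [Nat.add_sub_cancel, show 2 * (m + 1) - 1 = 2 * m + 1 by lia]
  set π := Ideal.Quotient.mk (Ideal.span {(1 - ζ) ^ (2 * m + 1)})
  have hrel (a b : ℤ) : a • π (1 - ζ) + b • π ζ = 0 ↔
      ((3 ^ m : ℕ) : ℤ) ∣ a ∧ ((3 ^ (m + 1) : ℕ) : ℤ) ∣ b := by
    rw [← map_zsmul, ← map_zsmul, ← map_add, Ideal.Quotient.eq_zero_iff_mem,
      smul_add_smul_mem_span_one_sub_zeta_pow_iff]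
    norm_cast
  have hspan : Submodule.span ℤ {π (1 - ζ), π ζ} = ⊤ :=
    span_pair_apply_eq_top (f := π.toAddMonoidHom.toIntLinearMap)
      Ideal.Quotient.mk_surjective span_one_sub_zeta_zeta
  obtain ⟨e, he⟩ := exists_zmod_prod_addEquiv_s7 hspan hrel
  exact ⟨e, fun a b ↦ by simp [π, he]⟩
end

section
/- Let k, l, m ≥ 1 be integers with 1/(2k+1) + 1/(2l+1) + 1/(2m+1) < 1, and let Δ = Δ(2k+1, 2l+1, 2m+1) with canonical generators c₀, c₁, c₂ (so all three link periods are odd). Then c₀, c₁, c₂ are pairwise conjugate in Δ, and the centralizer of c₀ in Δ equals the subgroup generated by c₀ and w = (c₂c₀)^m (c₁c₂)^l (c₀c₁)^k; moreover this centralizer is isomorphic to ℤ/2ℤ × ℤ (c₀ has order 2, w has infinite order, and they commute and generate their direct product). -/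
/-- Relators for the reflection group
`⟨c₀,c₁,c₂ ∣ c₀² = c₁² = c₂² = (c₀c₁)^k' = (c₁c₂)^l' = (c₂c₀)^m' = 1⟩`. -/
def triRels (k' l' m' : ℕ) : Set (FreeGroup (Fin 3)) :=
  {FreeGroup.of 0 ^ 2, FreeGroup.of 1 ^ 2, FreeGroup.of 2 ^ 2,
   (FreeGroup.of 0 * FreeGroup.of 1) ^ k',
   (FreeGroup.of 1 * FreeGroup.of 2) ^ l',
   (FreeGroup.of 2 * FreeGroup.of 0) ^ m'}

/-- The group `Δ(k', l', m')` with the above presentation. -/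
def Tri (k' l' m' : ℕ) : Type := PresentedGroup (triRels k' l' m')

instance (k' l' m' : ℕ) : Group (Tri k' l' m') :=
  inferInstanceAs (Group (PresentedGroup (triRels k' l' m')))

/-- The canonical generators `c₀, c₁, c₂` of `Δ(k', l', m')`. -/
def cgen (k' l' m' : ℕ) (j : Fin 3) : Tri k' l' m' :=
  PresentedGroup.of (rels := triRels k' l' m') j

/-!
`Δ(p, q, r)` is a Coxeter group of rank three, and in its geometric representation an element
commutes with `s i` exactly when it maps the simple root `α i` to `± α i`. So, up to the factor
`s i`, the centralizer is the stabilizer of `α i`.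

If `M i j = 2 * k + 1`, the transporter `(s i * s j) ^ k` maps `α i` to `α j`. Conversely, suppose
`x ≠ 1` maps `α i` to a simple root. Write `x = y * u` with `u` in the dihedral group of `s i` and
`s j`, where `s j` is a right descent of `x` and `y` has minimal length in its coset. Then `y` maps
`α i` and `α j` to nonnegative vectors and `u` maps `α i` to a nonnegative combination of `α i` and
`α j`; since a simple root is not a positive combination of two independent nonnegative vectors,
this combination is a single root, which forces `u` to be the transporter. Hence `x` is a product of
transporters along a path in the Coxeter graph. For a triangle with odd labels, every closed path is
homotopic to a power of the triangle, so the stabilizer of `α 0` is generated by the loop `w`.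

Finally, `w` has infinite order: each transporter around the triangle raises the coefficient of a
suitable simple root by at least one, because a bond with label at least three contributes an inner
product of at most `-1` when roots have square norm `2`.
-/

namespace CoxeterGeometry

open CoxeterSystem Polynomial.Chebyshev Real
open Module (Dual reflection reflection_apply reflection_inv)

section Chebyshev

variable {m : ℕ}

lemma sin_pi_div_pos (hm : 2 ≤ m) : 0 < sin (π / m) := by
  have hm' : (2 : ℝ) ≤ m := by exact_mod_cast hm
  exact sin_pos_of_pos_of_lt_pi (by positivity) (div_lt_self pi_pos (by linarith))

lemma S_eval_two_mul_cos_pi_div (hm : 2 ≤ m) (n : ℤ) :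
    (S ℝ n).eval (2 * cos (π / m)) = sin ((n + 1) * (π / m)) / sin (π / m) := by
  rw [eq_div_iff (sin_pi_div_pos hm).ne', S_two_mul_real_cos]

lemma S_eval_two_mul_cos_pi_div_pos {n : ℕ} (h : m ≠ 0 → n + 1 < m) :
    0 < (S ℝ n).eval (2 * cos (π / m)) := by
  obtain rfl | hm := eq_or_ne m 0
  · have : (0 : ℝ) < n + 1 := by positivity
    simpa [S_eval_two] using this
  have hn := h hm
  rw [S_eval_two_mul_cos_pi_div (by lia)]
  refine div_pos (sin_pos_of_pos_of_lt_pi (by positivity) ?_) (sin_pi_div_pos (by lia))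
  have hlt : (n + 1 : ℝ) < m := by exact_mod_cast hn
  calc ((n : ℤ) + 1 : ℝ) * (π / m) < m * (π / m) := by push_cast; gcongr
    _ = π := by field_simp

lemma S_eval_two_mul_cos_pi_div_sub_one (hm : 2 ≤ m) :
    (S ℝ (m - 1)).eval (2 * cos (π / m)) = 0 := by
  have : (m : ℝ) ≠ 0 := by positivity
  rw [S_eval_two_mul_cos_pi_div hm]
  simp [mul_div_cancel₀, this]

lemma S_eval_two_mul_cos_pi_div_sub_two (hm : 2 ≤ m) :
    (S ℝ (m - 2)).eval (2 * cos (π / m)) = 1 := by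
  have hm' : (m : ℝ) ≠ 0 := by positivity
  have harg : (((m - 2 : ℤ) : ℝ) + 1) * (π / m) = π - π / m := by push_cast; field_simp; ring
  rw [S_eval_two_mul_cos_pi_div hm, harg, sin_pi_sub, div_self (sin_pi_div_pos hm).ne']

lemma S_eval_two_mul_cos_pi_div_add_one_nonneg {n : ℕ} (h : m ≠ 0 → n + 1 < m) :
    0 ≤ (S ℝ (n + 1)).eval (2 * cos (π / m)) := by
  by_cases hlt : m ≠ 0 → (n + 1) + 1 < m
  · exact_mod_cast (S_eval_two_mul_cos_pi_div_pos hlt).le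
  · have hm : (m : ℤ) - 1 = n + 1 := by lia
    rw [← hm, S_eval_two_mul_cos_pi_div_sub_one (by lia)]

lemma S_eval_two_mul_cos_pi_div_two_mul (hm : 2 ≤ m) :
    (S ℝ (2 * m)).eval (2 * cos (π / m)) = 1 := by
  have hm' : (m : ℝ) ≠ 0 := by positivity
  have harg : (((2 * m : ℤ) : ℝ) + 1) * (π / m) = π / m + 2 * π := by push_cast; field_simp; ring
  rw [S_eval_two_mul_cos_pi_div hm, harg, sin_add_two_pi, div_self (sin_pi_div_pos hm).ne']

lemma S_eval_two_mul_cos_pi_div_two_mul_sub_one (hm : 2 ≤ m) :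
    (S ℝ (2 * m - 1)).eval (2 * cos (π / m)) = 0 := by
  have hm' : (m : ℝ) ≠ 0 := by positivity
  have harg : (((2 * m - 1 : ℤ) : ℝ) + 1) * (π / m) = 2 * π := by push_cast; field_simp; ring
  rw [S_eval_two_mul_cos_pi_div hm, harg, sin_two_pi, zero_div]

end Chebyshev

section Reflection

section CommRing

variable {R V : Type*} [CommRing R] [AddCommGroup V] [Module R V] {x y : V} {f g : Dual R V}
  (hf : f x = 2) (hg : g y = 2)

lemma reflection_mul_reflection_pow_apply_root {c : R} (hfy : f y = -c) (hgx : g x = -c) (n : ℕ) :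
    ((reflection hf * reflection hg) ^ n) x =
      (S R (2 * n)).eval c • x + (S R (2 * n - 1)).eval c • y := by
  induction n with
  | zero => simp
  | succ n ih =>
    have h₁ := congrArg (Polynomial.eval c) (S_add_one R (2 * n))
    have h₂ := congrArg (Polynomial.eval c) (S_add_two R (2 * n))
    simp only [Polynomial.eval_sub, Polynomial.eval_mul, Polynomial.eval_X] at h₁ h₂
    rw [show 2 * ((n + 1 : ℕ) : ℤ) = 2 * n + 2 by push_cast; ring,
      show 2 * (n : ℤ) + 2 - 1 = 2 * n + 1 by ring, pow_succ', LinearEquiv.mul_apply, ih,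
      LinearEquiv.mul_apply, h₂, h₁]
    simp only [reflection_apply, map_add, map_sub, map_smul, hf, hg, hfy, hgx]
    module

lemma reflection_apply_reflection_mul_reflection_pow_apply_root {c : R} (hfy : f y = -c)
    (hgx : g x = -c) (n : ℕ) :
    reflection hg (((reflection hf * reflection hg) ^ n) x) =
      (S R (2 * n)).eval c • x + (S R (2 * n + 1)).eval c • y := by
  have h := congrArg (Polynomial.eval c) (S_add_one R (2 * n))
  simp only [Polynomial.eval_sub, Polynomial.eval_mul, Polynomial.eval_X] at h
  rw [reflection_mul_reflection_pow_apply_root hf hg hfy hgx, h]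
  simp only [reflection_apply, map_add, map_smul, hg, hgx]
  module

lemma exists_reflection_mul_reflection_pow_apply_eq (n : ℕ) (v : V) :
    ∃ a b : R, ((reflection hf * reflection hg) ^ n) v = v + a • x + b • y := by
  induction n with
  | zero => exact ⟨0, 0, by simp⟩
  | succ n ih =>
    obtain ⟨a, b, h⟩ := ih
    rw [pow_succ', LinearEquiv.mul_apply, LinearEquiv.mul_apply, h, reflection_apply _ hg,
      reflection_apply _ hf]
    let u := v + a • x + b • y
    exact ⟨a - f (u - g u • y), b - g u, by simp only [u]; module⟩

lemma reflection_mul_reflection_pow_apply_eq_self {v : V} (hfv : f v = 0) (hgv : g v = 0) (n : ℕ) :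
    ((reflection hf * reflection hg) ^ n) v = v := by
  induction n with
  | zero => rfl
  | succ n ih => simp [pow_succ', ih, reflection_apply, hfv, hgv]

end CommRing

variable {K V : Type*} [Field K] [AddCommGroup V] [Module K V] {x y : V} {f g : Dual K V}
  (hf : f x = 2) (hg : g y = 2)

/- When `f y * g x ≠ 4`, the plane spanned by `x` and `y` is complementary to the common kernel of
`f` and `g`, which both reflections fix pointwise. -/
lemma reflection_mul_reflection_pow_eq_one (hne : f y * g x ≠ 4) {n : ℕ}
    (hx : ((reflection hf * reflection hg) ^ n) x = x)
    (hy : ((reflection hf * reflection hg) ^ n) y = y) :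
    (reflection hf * reflection hg) ^ n = 1 := by
  have hdet : 4 - f y * g x ≠ 0 := sub_ne_zero.2 hne.symm
  ext z
  let a := (2 * f z - f y * g z) / (4 - f y * g x)
  let b := (2 * g z - g x * f z) / (4 - f y * g x)
  let v := z - a • x - b • y
  have hfv : f v = 0 := by
    simp only [v, a, b, map_sub, map_smul, hf, smul_eq_mul]; field_simp; ring
  have hgv : g v = 0 := by
    simp only [v, a, b, map_sub, map_smul, hg, smul_eq_mul]; field_simp; ring
  have hv : ((reflection hf * reflection hg) ^ n) v = v :=
    reflection_mul_reflection_pow_apply_eq_self hf hg hfv hgv n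
  have hz : z = v + a • x + b • y := by simp only [v]; module
  rw [hz, map_add, map_add, map_smul, map_smul, hx, hy, hv]
  rfl

end Reflection

noncomputable section

section Form

variable {B : Type*} (M : CoxeterMatrix B)

/-- The Gram matrix `-2 cos (π / M i j)` of the simple roots, normalised so that roots have square
norm `2`. For `M i j = 0`, which encodes order `∞`, the convention `π / 0 = 0` yields the usual
value `-2`. -/
def gram (i j : B) : ℝ := -(2 * cos (π / M i j))

/-- The simple root indexed by `i`, in the free real vector space on `B`. -/
def simpleRoot (i : B) : B →₀ ℝ := Finsupp.single i 1

/-- The canonical bilinear form of `M`, with Gram matrix `gram M` on the simple roots. -/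
def form : (B →₀ ℝ) →ₗ[ℝ] Dual ℝ (B →₀ ℝ) :=
  Finsupp.linearCombination ℝ fun i ↦ Finsupp.linearCombination ℝ (gram M i)

@[simp] lemma gram_self (i : B) : gram M i i = 2 := by simp [gram]

lemma gram_comm (i j : B) : gram M i j = gram M j i := by rw [gram, gram, M.symmetric]

lemma gram_le_neg_one {i j : B} (h : 3 ≤ M i j) : gram M i j ≤ -1 := by
  have h' : (3 : ℝ) ≤ M i j := by exact_mod_cast h
  have : cos (π / 3) ≤ cos (π / M i j) :=
    cos_le_cos_of_nonneg_of_le_pi (by positivity) (by linarith [pi_pos]) (by gcongr)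
  rw [cos_pi_div_three] at this
  unfold gram
  linarith

lemma neg_two_lt_gram {i j : B} (h : M i j ≠ 0) : -2 < gram M i j := by
  obtain h1 | h2 : M i j = 1 ∨ 2 ≤ M i j := by lia
  · simp [gram, h1]
  · have hpos : 0 < π / M i j := by positivity
    have h2' : (2 : ℝ) ≤ M i j := by exact_mod_cast h2
    have hlt : cos (π / M i j) < cos 0 :=
      cos_lt_cos_of_nonneg_of_le_pi le_rfl (div_le_self pi_pos.le (by linarith)) hpos
    rw [cos_zero] at hlt
    unfold gram
    linarith

lemma gram_nonpos {i j : B} (h : i ≠ j) : gram M i j ≤ 0 := by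
  have := M.off_diagonal i j h
  obtain h0 | h2 : M i j = 0 ∨ 2 ≤ M i j := by lia
  · simp [gram, h0]
  · have h2' : (2 : ℝ) ≤ M i j := by exact_mod_cast h2
    have : 0 ≤ cos (π / M i j) :=
      cos_nonneg_of_neg_pi_div_two_le_of_le (by linarith [pi_pos, show 0 ≤ π / M i j by positivity])
        (by gcongr)
    unfold gram
    linarith

lemma simpleRoot_nonneg (i : B) : 0 ≤ simpleRoot i := Finsupp.single_nonneg.2 zero_le_one

lemma simpleRoot_ne_zero (i : B) : simpleRoot i ≠ 0 := by simp [simpleRoot]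

@[simp] lemma form_simpleRoot (i j : B) : form M (simpleRoot i) (simpleRoot j) = gram M i j := by
  simp [form, simpleRoot]

lemma form_comm (u v : B →₀ ℝ) : form M u v = form M v u := by
  have : form M = (form M).flip := by
    ext i j
    simpa [simpleRoot] using
      (form_simpleRoot M i j).trans ((gram_comm M i j).trans (form_simpleRoot M j i).symm)
  exact DFunLike.congr_fun (DFunLike.congr_fun this u) v

lemma form_simpleRoot_self (i : B) : form M (simpleRoot i) (simpleRoot i) = 2 := by simp

/-- The reflection in the simple root indexed by `i`, orthogonal for `form M`. -/
def simpleReflection (i : B) : (B →₀ ℝ) ≃ₗ[ℝ] (B →₀ ℝ) := reflection (form_simpleRoot_self M i)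

lemma simpleReflection_apply (i : B) (v : B →₀ ℝ) :
    simpleReflection M i v = v - form M (simpleRoot i) v • simpleRoot i :=
  reflection_apply v (form_simpleRoot_self M i)

lemma form_simpleReflection (i : B) (u v : B →₀ ℝ) :
    form M (simpleReflection M i u) (simpleReflection M i v) = form M u v := by
  simp only [simpleReflection_apply, map_sub, map_smul, LinearMap.sub_apply, LinearMap.smul_apply,
    form_simpleRoot, gram_self, smul_eq_mul, form_comm M u (simpleRoot i)]
  ring

lemma simpleReflection_mul_simpleReflection_pow_simpleRoot_left {i j : B} (hij : i ≠ j)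
    (hM : M i j ≠ 0) :
    ((simpleReflection M i * simpleReflection M j) ^ M i j) (simpleRoot i) = simpleRoot i := by
  have hM' : 2 ≤ M i j := by have := M.off_diagonal i j hij; lia
  have h := reflection_mul_reflection_pow_apply_root (form_simpleRoot_self M i)
    (form_simpleRoot_self M j) (form_simpleRoot M i j)
    ((form_simpleRoot M j i).trans (gram_comm M j i)) (M i j)
  rwa [S_eval_two_mul_cos_pi_div_two_mul hM', S_eval_two_mul_cos_pi_div_two_mul_sub_one hM',
    one_smul, zero_smul, add_zero] at h

lemma simpleReflection_inv (i : B) : (simpleReflection M i)⁻¹ = simpleReflection M i :=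
  reflection_inv (form_simpleRoot_self M i)

lemma simpleReflection_mul_simpleReflection_pow_simpleRoot_right {i j : B} (hij : i ≠ j)
    (hM : M i j ≠ 0) :
    ((simpleReflection M i * simpleReflection M j) ^ M i j) (simpleRoot j) = simpleRoot j := by
  have h := simpleReflection_mul_simpleReflection_pow_simpleRoot_left M hij.symm
    (by rwa [M.symmetric])
  rw [← simpleReflection_inv M i, ← simpleReflection_inv M j, ← mul_inv_rev, inv_pow,
    M.symmetric] at h
  exact ((LinearEquiv.symm_apply_eq _).1 h).symm

lemma isLiftable_simpleReflection : M.IsLiftable (simpleReflection M) := by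
  intro i j
  obtain rfl | hij := eq_or_ne i j
  · rw [M.diagonal, pow_one, mul_eq_one_iff_eq_inv, simpleReflection_inv]
  obtain hM | hM := eq_or_ne (M i j) 0
  · rw [hM, pow_zero]
  refine reflection_mul_reflection_pow_eq_one _ _ ?_
    (simpleReflection_mul_simpleReflection_pow_simpleRoot_left M hij hM)
    (simpleReflection_mul_simpleReflection_pow_simpleRoot_right M hij hM)
  rw [form_simpleRoot, form_simpleRoot, gram_comm M j i]
  nlinarith [neg_two_lt_gram M hM, gram_nonpos M hij]

end Form

section Representation

variable {B W : Type*} [Group W] {M : CoxeterMatrix B} (cs : CoxeterSystem M W)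

/-- The geometric (Tits) representation, in which simple reflections act by `simpleReflection`. -/
def geometricRep : W →* ((B →₀ ℝ) ≃ₗ[ℝ] (B →₀ ℝ)) :=
  cs.lift ⟨simpleReflection M, isLiftable_simpleReflection M⟩

@[simp] lemma geometricRep_simple (i : B) : geometricRep cs (cs.simple i) = simpleReflection M i :=
  cs.lift_apply_simple (isLiftable_simpleReflection M) i

lemma geometricRep_simple_simpleRoot_self (i : B) :
    geometricRep cs (cs.simple i) (simpleRoot i) = -simpleRoot i := by
  rw [geometricRep_simple]
  exact Module.reflection_apply_self _

lemma form_geometricRep (x : W) (u v : B →₀ ℝ) :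
    form M (geometricRep cs x u) (geometricRep cs x v) = form M u v := by
  induction x using cs.simple_induction_left with
  | one => simp
  | mul_simple_left x i ih =>
    rw [map_mul, geometricRep_simple, LinearEquiv.mul_apply, LinearEquiv.mul_apply,
      form_simpleReflection, ih]

lemma geometricRep_alternatingWord_simpleRoot (i j : B) (n : ℕ) :
    geometricRep cs (cs.wordProd (alternatingWord i j n)) (simpleRoot i) =
      (S ℝ n).eval (2 * cos (π / M i j)) • simpleRoot (if Even n then i else j) +
        (S ℝ (n - 1)).eval (2 * cos (π / M i j)) • simpleRoot (if Even n then j else i) := by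
  have hij := form_simpleRoot M i j
  have hji := (form_simpleRoot M j i).trans (gram_comm M j i)
  rw [cs.prod_alternatingWord_eq_mul_pow]
  obtain ⟨k, rfl | rfl⟩ := n.even_or_odd'
  · have h := reflection_mul_reflection_pow_apply_root (form_simpleRoot_self M i)
      (form_simpleRoot_self M j) hij hji k
    simpa [simpleReflection] using h
  · have h := reflection_apply_reflection_mul_reflection_pow_apply_root (form_simpleRoot_self M i)
      (form_simpleRoot_self M j) hij hji k
    have hdiv : (2 * k + 1) / 2 = k := by lia
    have hodd : ¬ Even (2 * k + 1) := by simp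
    simpa [hodd, hdiv, simpleReflection, add_comm (_ • simpleRoot j)] using h

end Representation

section Descent

variable {B W : Type*} [Group W] {M : CoxeterMatrix B} {cs : CoxeterSystem M W}

lemma exists_eq_mul_alternatingWord {x : W} {i : B} (j : B) (hx : ¬ cs.IsRightDescent x i) :
    ∃ y n, x = y * cs.wordProd (alternatingWord i j n) ∧ cs.length x = cs.length y + n ∧
      ¬ cs.IsRightDescent y i ∧ ¬ cs.IsRightDescent y j := by
  induction hℓ : cs.length x using Nat.strong_induction_on generalizing x i j with
  | _ ℓ ih =>
    subst hℓ
    by_cases hj : cs.IsRightDescent x j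
    · obtain ⟨y, n, hxy, hℓ, hyj, hyi⟩ :=
        ih _ hj i (cs.isRightDescent_iff_not_isRightDescent_mul.1 hj) rfl
      refine ⟨y, n + 1, ?_, ?_, hyi, hyj⟩
      · rw [alternatingWord_succ, List.concat_eq_append, cs.wordProd_append,
          cs.wordProd_singleton, ← mul_assoc, ← hxy, cs.simple_mul_simple_cancel_right]
      · rw [← cs.isRightDescent_iff.1 hj, hℓ, add_assoc]
    · exact ⟨x, 0, by simp [alternatingWord], rfl, hx, hj⟩

lemma lt_of_not_isRightDescent_mul_alternatingWord {y : W} {i j : B} {n : ℕ}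
    (hℓ : cs.length (y * cs.wordProd (alternatingWord i j n)) = cs.length y + n)
    (hi : ¬ cs.IsRightDescent (y * cs.wordProd (alternatingWord i j n)) i) (hM : M i j ≠ 0) :
    n < M i j := by
  by_contra! hn
  refine cs.not_isReduced_alternatingWord j i (M.symmetric i j ▸ hM) (m := n + 1)
    (by rw [M.symmetric]; lia) ?_
  have h := cs.not_isRightDescent_iff.1 hi
  rw [mul_assoc, ← cs.wordProd_singleton i, ← cs.wordProd_append, ← List.concat_eq_append,
    ← alternatingWord_succ, hℓ] at h
  have hle := cs.length_mul_le y (cs.wordProd (alternatingWord j i (n + 1)))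
  have hle' := cs.length_wordProd_le (alternatingWord j i (n + 1))
  rw [CoxeterSystem.IsReduced]
  rw [length_alternatingWord] at hle' ⊢
  lia

theorem exists_eq_mul_alternatingWord_succ {x : W} {i : B} (hx : x ≠ 1)
    (hi : ¬ cs.IsRightDescent x i) :
    ∃ j y n, i ≠ j ∧ x = y * cs.wordProd (alternatingWord i j (n + 1)) ∧
      cs.length y < cs.length x ∧ ¬ cs.IsRightDescent y i ∧ ¬ cs.IsRightDescent y j ∧
      (M i j ≠ 0 → n + 1 < M i j) := by
  obtain ⟨j, hj⟩ := cs.exists_rightDescent_of_ne_one hx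
  obtain ⟨y, n, rfl, hℓ, hyi, hyj⟩ := exists_eq_mul_alternatingWord j hi
  cases n with
  | zero => exact absurd hj (by simpa [alternatingWord] using hyj)
  | succ n =>
    exact ⟨j, y, n, fun h ↦ hi (h ▸ hj), rfl, by lia, hyi, hyj,
      lt_of_not_isRightDescent_mul_alternatingWord hℓ hi⟩

theorem geometricRep_simpleRoot_nonneg {x : W} {i : B} (hi : ¬ cs.IsRightDescent x i) :
    0 ≤ geometricRep cs x (simpleRoot i) := by
  induction hℓ : cs.length x using Nat.strong_induction_on generalizing x i with
  | _ ℓ ih =>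
    subst hℓ
    obtain rfl | hx := eq_or_ne x 1
    · simpa using simpleRoot_nonneg i
    obtain ⟨j, y, n, -, rfl, hlt, hyi, hyj, hn⟩ := exists_eq_mul_alternatingWord_succ hx hi
    have hi' := ih _ hlt hyi rfl
    have hj' := ih _ hlt hyj rfl
    have hS := (S_eval_two_mul_cos_pi_div_pos hn).le
    have hS' := S_eval_two_mul_cos_pi_div_add_one_nonneg hn
    rw [map_mul, LinearEquiv.mul_apply, geometricRep_alternatingWord_simpleRoot, map_add, map_smul,
      map_smul, Nat.cast_add_one, add_sub_cancel_right]
    split_ifs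
    · exact add_nonneg (smul_nonneg hS' hi') (smul_nonneg hS hj')
    · exact add_nonneg (smul_nonneg hS' hj') (smul_nonneg hS hi')

lemma not_isRightDescent_of_geometricRep_eq_simpleRoot {x : W} {i z : B}
    (h : geometricRep cs x (simpleRoot i) = simpleRoot z) : ¬ cs.IsRightDescent x i := by
  intro hi
  have hneg := geometricRep_simpleRoot_nonneg (cs.isRightDescent_iff_not_isRightDescent_mul.1 hi)
  rw [map_mul, LinearEquiv.mul_apply, geometricRep_simple_simpleRoot_self, map_neg, h,
    Left.nonneg_neg_iff] at hneg
  exact simpleRoot_ne_zero z (hneg.antisymm (simpleRoot_nonneg z))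

lemma eq_single_of_smul_add_smul_eq_single {u v : B →₀ ℝ} (hu : 0 ≤ u) (hv : 0 ≤ v) {p q c : ℝ}
    (hp : 0 < p) (hq : 0 ≤ q) {z : B} (h : p • u + q • v = Finsupp.single z c) :
    u = Finsupp.single z (u z) := by
  ext t
  obtain rfl | ht := eq_or_ne t z
  · simp
  · have hsum : p * u t + q * v t = 0 := by
      simpa [Finsupp.single_eq_of_ne ht] using DFunLike.congr_fun h t
    have : p * u t = 0 := by linarith [mul_nonneg hp.le (hu t), mul_nonneg hq (hv t)]
    simpa [Finsupp.single_eq_of_ne ht, hp.ne'] using this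

lemma smul_add_smul_ne_simpleRoot {e : (B →₀ ℝ) ≃ₗ[ℝ] (B →₀ ℝ)} {a b : B} (hab : a ≠ b)
    (ha : 0 ≤ e (simpleRoot a)) (hb : 0 ≤ e (simpleRoot b)) {p q : ℝ} (hp : 0 < p) (hq : 0 < q)
    (z : B) : p • e (simpleRoot a) + q • e (simpleRoot b) ≠ simpleRoot z := by
  intro h
  set u := e (simpleRoot a)
  set v := e (simpleRoot b)
  have hu : u = Finsupp.single z (u z) := eq_single_of_smul_add_smul_eq_single ha hb hp hq.le h
  have hv : v = Finsupp.single z (v z) :=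
    eq_single_of_smul_add_smul_eq_single hb ha hq hp.le ((add_comm _ _).trans h)
  have hcomb : e (v z • simpleRoot a) = e (u z • simpleRoot b) := by
    rw [map_smul, map_smul]
    change v z • u = u z • v
    rw [hu, hv]
    simp [mul_comm]
  have hvz : v z = 0 := by
    simpa [simpleRoot, hab] using DFunLike.congr_fun (e.injective hcomb) a
  rw [hvz, Finsupp.single_zero] at hv
  exact simpleRoot_ne_zero b (e.map_eq_zero_iff.1 hv)

end Descent

section Transporter

variable {B W : Type*} [Group W] {M : CoxeterMatrix B} (cs : CoxeterSystem M W)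

/-- The element `(s i * s j) ^ k` for `M i j = 2 * k + 1`, which moves the simple root `i` to the
simple root `j` and hence conjugates `s i` into `s j`. It is of use only when `M i j` is odd. -/
def transporter (i j : B) : W := (cs.simple i * cs.simple j) ^ (M i j / 2)

/-- The product of the transporters along the closed path `i → j → t → i`. -/
def triangleLoop (i j t : B) : W := transporter cs t i * transporter cs j t * transporter cs i j

lemma transporter_inv (i j : B) : (transporter cs i j)⁻¹ = transporter cs j i := by
  rw [transporter, transporter, ← inv_pow, mul_inv_rev, cs.inv_simple, cs.inv_simple, M.symmetric]

lemma transporter_mul_simple (i j : B) :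
    transporter cs i j * cs.simple j = cs.simple j * transporter cs j i := by
  have h : SemiconjBy (cs.simple j) (cs.simple j * cs.simple i) (cs.simple i * cs.simple j) := by
    simp [SemiconjBy, mul_assoc]
  rw [transporter, transporter, M.symmetric j i]
  exact (h.pow_right _).eq.symm

variable {i j : B}

lemma semiconjBy_transporter (h : Odd (M i j)) :
    SemiconjBy (transporter cs i j) (cs.simple i) (cs.simple j) := by
  obtain ⟨k, hk⟩ := h
  have hpow : transporter cs i j * transporter cs i j * (cs.simple i * cs.simple j) = 1 := by
    rw [transporter, ← pow_add, ← pow_succ, show M i j / 2 + M i j / 2 + 1 = M i j by lia,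
      cs.simple_mul_simple_pow]
  have hinv : transporter cs j i * cs.simple j = cs.simple j * transporter cs i j := by
    rw [← cs.simple_mul_simple_cancel_left (w := transporter cs j i * cs.simple j) j,
      ← mul_assoc _ (transporter cs j i), ← transporter_mul_simple,
      cs.simple_mul_simple_cancel_right]
  calc transporter cs i j * cs.simple i
      = transporter cs j i * (transporter cs i j * transporter cs i j *
          (cs.simple i * cs.simple j)) * cs.simple j := by
        rw [← transporter_inv]
        simp [mul_assoc]
    _ = cs.simple j * transporter cs i j := by rw [hpow, mul_one, hinv]

lemma orderOf_simple (i : B) : orderOf (cs.simple i) = 2 := by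
  refine orderOf_eq_prime (cs.simple_sq i) fun h ↦ ?_
  simpa [h] using cs.length_simple i

lemma isConj_simple (h : Odd (M i j)) : IsConj (cs.simple i) (cs.simple j) :=
  ⟨toUnits (transporter cs i j), semiconjBy_transporter cs h⟩

lemma commute_simple_triangleLoop {t : B} (hij : Odd (M i j)) (hjt : Odd (M j t))
    (hti : Odd (M t i)) : Commute (cs.simple i) (triangleLoop cs i j t) :=
  Commute.symm <| ((semiconjBy_transporter cs hti).mul_left
    (semiconjBy_transporter cs hjt)).mul_left (semiconjBy_transporter cs hij)

lemma wordProd_alternatingWord_eq_transporter (h : Odd (M i j)) :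
    cs.wordProd (alternatingWord i j (M i j - 1)) = transporter cs i j := by
  obtain ⟨k, hk⟩ := h
  rw [cs.prod_alternatingWord_eq_mul_pow, if_pos (by simp [hk]), one_mul, transporter]
  congr 1
  lia

lemma three_le_of_odd (hij : i ≠ j) (h : Odd (M i j)) : 3 ≤ M i j := by
  have := M.off_diagonal i j hij
  obtain ⟨k, hk⟩ := h
  lia

lemma geometricRep_transporter_simpleRoot_left (hij : i ≠ j) (h : Odd (M i j)) :
    geometricRep cs (transporter cs i j) (simpleRoot i) = simpleRoot j := by
  have h3 := three_le_of_odd hij h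
  have heven : Even (M i j - 1) := Nat.Odd.sub_odd h odd_one
  rw [← wordProd_alternatingWord_eq_transporter cs h, geometricRep_alternatingWord_simpleRoot,
    if_pos heven, if_pos heven, Nat.cast_pred (by lia),
    S_eval_two_mul_cos_pi_div_sub_one (by lia), sub_sub, one_add_one_eq_two,
    S_eval_two_mul_cos_pi_div_sub_two (by lia), zero_smul, one_smul, zero_add]

lemma geometricRep_transporter_simpleRoot_right (hij : i ≠ j) (h : Odd (M i j)) :
    geometricRep cs (transporter cs i j) (simpleRoot j) =
      gram M i j • simpleRoot j - simpleRoot i := by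
  have hji := geometricRep_transporter_simpleRoot_left cs hij.symm (M.symmetric i j ▸ h)
  calc geometricRep cs (transporter cs i j) (simpleRoot j)
      = -geometricRep cs (transporter cs i j * cs.simple j) (simpleRoot j) := by
        rw [map_mul, LinearEquiv.mul_apply, geometricRep_simple_simpleRoot_self, map_neg, neg_neg]
    _ = -simpleReflection M j (simpleRoot i) := by
        rw [transporter_mul_simple, map_mul, LinearEquiv.mul_apply, hji, geometricRep_simple]
    _ = gram M i j • simpleRoot j - simpleRoot i := by
        rw [simpleReflection_apply, form_simpleRoot, gram_comm, neg_sub]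

variable {cs}

theorem exists_eq_mul_transporter {x : W} {z : B} (hodd : ∀ j, i ≠ j → Odd (M i j))
    (hx : x ≠ 1) (h : geometricRep cs x (simpleRoot i) = simpleRoot z) :
    ∃ j y, i ≠ j ∧ x = y * transporter cs i j ∧ cs.length y < cs.length x ∧
      geometricRep cs y (simpleRoot j) = simpleRoot z := by
  obtain ⟨j, y, n, hij, rfl, hlt, hyi, hyj, hn⟩ :=
    exists_eq_mul_alternatingWord_succ hx (not_isRightDescent_of_geometricRep_eq_simpleRoot h)
  have hi := geometricRep_simpleRoot_nonneg hyi
  have hj := geometricRep_simpleRoot_nonneg hyj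
  have hn' := hn (hodd j hij).pos.ne'
  obtain hlast | hlt' : n + 1 = M i j - 1 ∨ n + 2 < M i j := by lia
  · rw [hlast, wordProd_alternatingWord_eq_transporter cs (hodd j hij)] at h hlt ⊢
    rw [map_mul, LinearEquiv.mul_apply,
      geometricRep_transporter_simpleRoot_left cs hij (hodd j hij)] at h
    exact ⟨j, y, hij, rfl, hlt, h⟩
  · have hS := S_eval_two_mul_cos_pi_div_pos hn
    have hS' := S_eval_two_mul_cos_pi_div_pos (n := n + 1) fun _ ↦ hlt'
    rw [map_mul, LinearEquiv.mul_apply, geometricRep_alternatingWord_simpleRoot, map_add,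
      map_smul, map_smul, Nat.cast_add_one, add_sub_cancel_right] at h
    rw [Nat.cast_add_one] at hS'
    split_ifs at h
    · exact absurd h (smul_add_smul_ne_simpleRoot hij hi hj hS' hS z)
    · exact absurd h (smul_add_smul_ne_simpleRoot hij.symm hj hi hS' hS z)

theorem inv_mul_mul_mem_of_geometricRep_eq (hodd : Pairwise fun i j ↦ Odd (M i j))
    {H : Subgroup W} {h : B → W} (hH : Pairwise fun i j ↦ (h j)⁻¹ * transporter cs i j * h i ∈ H)
    {x : W} {i z : B} (hx : geometricRep cs x (simpleRoot i) = simpleRoot z) :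
    (h z)⁻¹ * x * h i ∈ H := by
  induction hℓ : cs.length x using Nat.strong_induction_on generalizing x i with
  | _ ℓ ih =>
    subst hℓ
    obtain rfl | hx1 := eq_or_ne x 1
    · have hiz : i = z := by simpa [simpleRoot, Finsupp.single_left_inj] using hx
      simp [hiz]
    obtain ⟨j, y, hij, rfl, hlt, hy⟩ :=
      exists_eq_mul_transporter (fun j hij ↦ hodd hij) hx1 hx
    have : (h z)⁻¹ * (y * transporter cs i j) * h i =
        (h z)⁻¹ * y * h j * ((h j)⁻¹ * transporter cs i j * h i) := by group
    rw [this]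
    exact mul_mem (ih _ hlt hy rfl) (hH hij)

lemma geometricRep_simpleRoot_eq_or_eq_neg {x : W} (h : Commute (cs.simple i) x) :
    geometricRep cs x (simpleRoot i) = simpleRoot i ∨
      geometricRep cs x (simpleRoot i) = -simpleRoot i := by
  set v := geometricRep cs x (simpleRoot i) with hv
  have hneg : simpleReflection M i v = -v := by
    rw [hv, ← geometricRep_simple cs, ← LinearEquiv.mul_apply, ← map_mul, h.eq, map_mul,
      LinearEquiv.mul_apply, geometricRep_simple_simpleRoot_self, map_neg]
  obtain ⟨c, hc⟩ : ∃ c : ℝ, v = c • simpleRoot i := by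
    refine ⟨form M (simpleRoot i) v / 2, ?_⟩
    rw [simpleReflection_apply, sub_eq_iff_eq_add] at hneg
    linear_combination (norm := module) (1 / 2 : ℝ) • hneg
  have hnorm : form M v v = 2 := by rw [hv, form_geometricRep, form_simpleRoot_self]
  have hc2 : c * c = 1 := by
    simp only [hc, map_smul, LinearMap.smul_apply, form_simpleRoot_self, smul_eq_mul] at hnorm
    linarith
  rw [hc]
  obtain rfl | rfl := mul_self_eq_one_iff.1 hc2
  · simp
  · simp

theorem centralizer_simple_le (hodd : Pairwise fun i j ↦ Odd (M i j)) {H : Subgroup W}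
    {h : B → W} (hH : Pairwise fun i j ↦ (h j)⁻¹ * transporter cs i j * h i ∈ H) {i : B}
    (hi : h i = 1) :
    Subgroup.centralizer {cs.simple i} ≤ Subgroup.zpowers (cs.simple i) ⊔ H := by
  have hsup {y : W} (hy : geometricRep cs y (simpleRoot i) = simpleRoot i) :
      y ∈ Subgroup.zpowers (cs.simple i) ⊔ H := by
    have := inv_mul_mul_mem_of_geometricRep_eq hodd hH hy
    rw [hi, inv_one, one_mul, mul_one] at this
    exact Subgroup.mem_sup_right this
  intro x hx
  obtain hpos | hneg :=
    geometricRep_simpleRoot_eq_or_eq_neg (Subgroup.mem_centralizer_singleton_iff.1 hx).symm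
  · exact hsup hpos
  · rw [← cs.simple_mul_simple_cancel_right (w := x) i]
    refine mul_mem (hsup ?_) (Subgroup.mem_sup_left (Subgroup.mem_zpowers _))
    rw [map_mul, LinearEquiv.mul_apply, geometricRep_simple_simpleRoot_self, map_neg, hneg,
      neg_neg]

end Transporter

section InfiniteOrder

variable {B W : Type*} [Group W] {M : CoxeterMatrix B} (cs : CoxeterSystem M W)

lemma exists_geometricRep_transporter_simpleRoot_eq {i j t : B} (hij : i ≠ j) (h : Odd (M i j))
    (hit : 3 ≤ M i t) (hjt : 3 ≤ M j t) :
    ∃ a b : ℝ, 2 ≤ a ∧ geometricRep cs (transporter cs i j) (simpleRoot t) =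
      simpleRoot t + a • simpleRoot i + b • simpleRoot j := by
  obtain ⟨a, b, hab⟩ : ∃ a b : ℝ, geometricRep cs (transporter cs i j) (simpleRoot t) =
      simpleRoot t + a • simpleRoot i + b • simpleRoot j := by
    rw [transporter, map_pow, map_mul, geometricRep_simple, geometricRep_simple]
    exact exists_reflection_mul_reflection_pow_apply_eq _ _ _ _
  refine ⟨a, b, ?_, hab⟩
  have hi := form_geometricRep cs (transporter cs i j) (simpleRoot i) (simpleRoot t)
  have hj := form_geometricRep cs (transporter cs i j) (simpleRoot j) (simpleRoot t)
  rw [hab, geometricRep_transporter_simpleRoot_left cs hij h] at hi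
  rw [hab, geometricRep_transporter_simpleRoot_right cs hij h] at hj
  simp only [map_add, map_sub, map_smul, LinearMap.sub_apply, LinearMap.smul_apply,
    form_simpleRoot, gram_self, gram_comm M j i, smul_eq_mul] at hi hj
  have hg := neg_two_lt_gram M h.pos.ne'
  have hg' := gram_le_neg_one M (three_le_of_odd hij h)
  have ha : (2 + gram M i j) * a = -(gram M i t + gram M j t) := by
    refine mul_left_cancel₀ (show 2 - gram M i j ≠ 0 by linarith) ?_
    linear_combination gram M i j * hi - 2 * hj
  nlinarith [gram_le_neg_one M hit, gram_le_neg_one M hjt]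

/-- The growth condition on a linear functional `ψ` that is propagated by the transporters around
a triangle `j, i, t` of the Coxeter graph: `ψ` vanishes at the simple root `j` and is at least `r`
at the simple root `i`, while its value at the simple root `t` compensates a negative sign. -/
structure GrowthBound (ψ : Dual ℝ (B →₀ ℝ)) (j i t : B) (r : ℝ) : Prop where
  eq_zero : ψ (simpleRoot j) = 0
  le_apply : r ≤ ψ (simpleRoot i)
  one_le_add : 1 ≤ ψ (simpleRoot i) + ψ (simpleRoot t)

variable {cs} {i j t : B}

lemma GrowthBound.comp_transporter {ψ : Dual ℝ (B →₀ ℝ)} {r : ℝ} (hr : 0 ≤ r)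
    (hψ : GrowthBound ψ j i t r) (hij : i ≠ j) (h : Odd (M i j)) (hit : 3 ≤ M i t)
    (hjt : 3 ≤ M j t) :
    GrowthBound (ψ ∘ₗ geometricRep cs (transporter cs i j)) i t j (r + 1) := by
  obtain ⟨a, b, ha, hab⟩ := exists_geometricRep_transporter_simpleRoot_eq cs hij h hit hjt
  have hi := hψ.le_apply
  have hone := hψ.one_le_add
  have hmul : 2 * ψ (simpleRoot i) ≤ a * ψ (simpleRoot i) := by gcongr; linarith
  refine ⟨?_, ?_, ?_⟩ <;>
    simp only [LinearMap.comp_apply, LinearEquiv.coe_coe, hab,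
      geometricRep_transporter_simpleRoot_left cs hij h,
      geometricRep_transporter_simpleRoot_right cs hij h, map_add, map_sub, map_smul, smul_eq_mul,
      hψ.eq_zero]
  all_goals linarith

lemma GrowthBound.comp_triangleLoop (hodd : Pairwise fun i j ↦ Odd (M i j)) (hij : i ≠ j)
    (hjt : j ≠ t) (hti : t ≠ i) {ψ : Dual ℝ (B →₀ ℝ)} {r : ℝ} (hr : 0 ≤ r)
    (hψ : GrowthBound ψ i t j r) :
    GrowthBound (ψ ∘ₗ geometricRep cs (triangleLoop cs i j t)) i t j (r + 3) := by
  have h3 : Pairwise fun i j ↦ 3 ≤ M i j := fun _ _ h ↦ three_le_of_odd h (hodd h)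
  have h₁ := hψ.comp_transporter (cs := cs) hr hti (hodd hti) (h3 hjt.symm) (h3 hij)
  have h₂ := h₁.comp_transporter (cs := cs) (by linarith) hjt (hodd hjt) (h3 hij.symm)
    (h3 hti)
  have h₃ := h₂.comp_transporter (cs := cs) (by linarith) hij (hodd hij) (h3 hti.symm)
    (h3 hjt)
  convert h₃ using 1
  · simp only [triangleLoop, map_mul]; rfl
  · ring

theorem not_isOfFinOrder_triangleLoop (hodd : Pairwise fun i j ↦ Odd (M i j)) (hij : i ≠ j)
    (hjt : j ≠ t) (hti : t ≠ i) : ¬ IsOfFinOrder (triangleLoop cs i j t) := by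
  set w := triangleLoop cs i j t with hw
  let ψ : Dual ℝ (B →₀ ℝ) := Finsupp.lapply t
  have hψ : ψ (simpleRoot t) = 1 := Finsupp.single_eq_same
  have hgrowth (n : ℕ) : GrowthBound (ψ ∘ₗ geometricRep cs (w ^ n)) i t j (1 + 3 * n) := by
    induction n with
    | zero => constructor <;> simp [ψ, simpleRoot, hti, hjt.symm]
    | succ n ih =>
      convert ih.comp_triangleLoop (cs := cs) hodd hij hjt hti (by positivity) using 1
      · rw [pow_succ, map_mul, hw]; rfl
      · push_cast; ring
  rw [isOfFinOrder_iff_pow_eq_one]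
  rintro ⟨n, hn, hwn⟩
  have hle : 1 + 3 * (n : ℝ) ≤ 1 := by simpa [hwn, hψ] using (hgrowth n).le_apply
  have hn' : (0 : ℝ) < n := by exact_mod_cast hn
  linarith

end InfiniteOrder

section ClosurePair

variable {G : Type*} [Group G] {a w : G}

lemma closure_pair_eq_sup_zpowers (a w : G) :
    Subgroup.closure {a, w} = Subgroup.zpowers a ⊔ Subgroup.zpowers w := by
  rw [Set.insert_eq, Subgroup.closure_union, Subgroup.zpowers_eq_closure,
    Subgroup.zpowers_eq_closure]

lemma disjoint_zpowers_of_isOfFinOrder (ha : IsOfFinOrder a) (hw : ¬ IsOfFinOrder w) :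
    Disjoint (Subgroup.zpowers a) (Subgroup.zpowers w) := by
  rw [Subgroup.disjoint_def]
  rintro _ hxa ⟨n, rfl⟩
  obtain ⟨d, hd, hwd⟩ := (ha.of_mem_zpowers hxa).exists_pow_eq_one
  have hnd : w ^ (n * d) = w ^ (0 : ℤ) := by simpa [zpow_mul] using hwd
  have hn : n * d = 0 := injective_zpow_iff_not_isOfFinOrder.2 hw hnd
  obtain rfl : n = 0 := by simpa [hd.ne'] using hn
  exact zpow_zero w

theorem nonempty_closure_pair_mulEquiv (ha : IsOfFinOrder a) (hw : ¬ IsOfFinOrder w)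
    (haw : Commute a w) :
    Nonempty (Subgroup.closure {a, w} ≃* Multiplicative (ZMod (orderOf a) × ℤ)) := by
  let A := Subgroup.zpowers a
  have hcomm (x : A) (n : Multiplicative ℤ) : Commute (A.subtype x) (zpowersHom G w n) := by
    obtain ⟨_, m, rfl⟩ := x
    exact haw.zpow_zpow m n.toAdd
  have hinj : Function.Injective (A.subtype.noncommCoprod (zpowersHom G w) hcomm) := by
    rw [MonoidHom.noncommCoprod_injective, A.range_subtype, Subgroup.range_zpowersHom]
    exact ⟨A.subtype_injective, injective_zpow_iff_not_isOfFinOrder.2 hw,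
      disjoint_zpowers_of_isOfFinOrder ha hw⟩
  have hrange : (A.subtype.noncommCoprod (zpowersHom G w) hcomm).range =
      Subgroup.closure {a, w} := by
    rw [MonoidHom.noncommCoprod_range, A.range_subtype, Subgroup.range_zpowersHom,
      closure_pair_eq_sup_zpowers]
  let eA : Multiplicative (ZMod (orderOf a)) ≃* A :=
    Nat.card_zpowers a ▸ zmodCyclicMulEquiv inferInstance
  exact ⟨(MulEquiv.subgroupCongr hrange).symm.trans ((MonoidHom.ofInjective hinj).symm.trans
    ((eA.symm.prodCongr (.refl _)).trans (MulEquiv.prodMultiplicative _ _).symm))⟩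

end ClosurePair

section RankThree

variable {W : Type*} [Group W] {M : CoxeterMatrix (Fin 3)} {cs : CoxeterSystem M W}

theorem centralizer_simple_zero_le (hodd : Pairwise fun i j ↦ Odd (M i j)) :
    Subgroup.centralizer {cs.simple 0} ≤
      Subgroup.zpowers (cs.simple 0) ⊔ Subgroup.zpowers (triangleLoop cs 0 1 2) := by
  let h : Fin 3 → W := ![1, transporter cs 0 1, transporter cs 1 2 * transporter cs 0 1]
  let H := Subgroup.zpowers (triangleLoop cs 0 1 2)
  have hsymm {i j : Fin 3} (hij : (h j)⁻¹ * transporter cs i j * h i ∈ H) :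
      (h i)⁻¹ * transporter cs j i * h j ∈ H := by
    simpa [transporter_inv, mul_assoc] using inv_mem hij
  have h01 : (h 1)⁻¹ * transporter cs 0 1 * h 0 ∈ H := by simp [h]
  have h12 : (h 2)⁻¹ * transporter cs 1 2 * h 1 ∈ H := by simp [h, mul_assoc]
  have h20 : (h 0)⁻¹ * transporter cs 2 0 * h 2 ∈ H := by
    simp [h, H, triangleLoop, ← mul_assoc]
  refine centralizer_simple_le hodd (h := h) (fun i j hij ↦ ?_) rfl
  fin_cases i <;> fin_cases j
  exacts [(hij rfl).elim, h01, hsymm h20, hsymm h01, (hij rfl).elim, h12, h20, hsymm h12,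
    (hij rfl).elim]

lemma commute_simple_zero_triangleLoop (hodd : Pairwise fun i j ↦ Odd (M i j)) :
    Commute (cs.simple 0) (triangleLoop cs 0 1 2) :=
  commute_simple_triangleLoop cs (hodd (by decide)) (hodd (by decide)) (hodd (by decide))

lemma not_isOfFinOrder_triangleLoop_zero (hodd : Pairwise fun i j ↦ Odd (M i j)) :
    ¬ IsOfFinOrder (triangleLoop cs 0 1 2) :=
  not_isOfFinOrder_triangleLoop hodd (by decide) (by decide) (by decide)

theorem centralizer_simple_zero (hodd : Pairwise fun i j ↦ Odd (M i j)) :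
    Subgroup.centralizer {cs.simple 0} =
      Subgroup.closure {cs.simple 0, triangleLoop cs 0 1 2} := by
  refine le_antisymm ?_ ?_
  · rw [closure_pair_eq_sup_zpowers]
    exact centralizer_simple_zero_le hodd
  · rw [Subgroup.closure_le, Set.insert_subset_iff, Set.singleton_subset_iff]
    exact ⟨Subgroup.mem_centralizer_singleton_iff.2 rfl,
      Subgroup.mem_centralizer_singleton_iff.2 (commute_simple_zero_triangleLoop hodd).eq.symm⟩

theorem nonempty_centralizer_simple_zero_mulEquiv (hodd : Pairwise fun i j ↦ Odd (M i j)) :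
    Nonempty (Subgroup.centralizer {cs.simple 0} ≃* Multiplicative (ZMod 2 × ℤ)) := by
  have hfin : IsOfFinOrder (cs.simple 0) :=
    isOfFinOrder_iff_pow_eq_one.2 ⟨2, two_pos, cs.simple_sq 0⟩
  have h := nonempty_closure_pair_mulEquiv hfin (not_isOfFinOrder_triangleLoop_zero hodd)
    (commute_simple_zero_triangleLoop hodd)
  rwa [orderOf_simple, ← centralizer_simple_zero hodd] at h

end RankThree

section TriangleGroup

variable {p q r : ℕ}

/-- The Coxeter matrix of `Tri p q r`. -/
def triangleMatrix (hp : p ≠ 1) (hq : q ≠ 1) (hr : r ≠ 1) : CoxeterMatrix (Fin 3) where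
  M := !![1, p, r; p, 1, q; r, q, 1]
  isSymm := by
    ext i j
    fin_cases i <;> fin_cases j <;> rfl
  diagonal i := by fin_cases i <;> rfl
  off_diagonal i j hij := by
    fin_cases i <;> fin_cases j <;> simp_all

lemma odd_triangleMatrix (hp' : Odd p) (hq' : Odd q) (hr' : Odd r) (hp : p ≠ 1) (hq : q ≠ 1)
    (hr : r ≠ 1) : Pairwise fun i j ↦ Odd (triangleMatrix hp hq hr i j) := by
  intro i j hij
  fin_cases i <;> fin_cases j
  exacts [(hij rfl).elim, hp', hr', hp', (hij rfl).elim, hq', hr', hq', (hij rfl).elim]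

lemma cgen_mul_self (i : Fin 3) : cgen p q r i * cgen p q r i = 1 := by
  rw [← pow_two]
  refine PresentedGroup.one_of_mem (rels := triRels p q r) (x := FreeGroup.of i ^ 2) ?_
  fin_cases i <;> simp [triRels]

lemma cgen_mul_cgen_pow_comm {i j : Fin 3} {n : ℕ} (h : (cgen p q r i * cgen p q r j) ^ n = 1) :
    (cgen p q r j * cgen p q r i) ^ n = 1 := by
  rw [← inv_eq_of_mul_eq_one_left (cgen_mul_self i), ← inv_eq_of_mul_eq_one_left (cgen_mul_self j),
    ← mul_inv_rev, inv_pow, h, inv_one]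

variable (hp : p ≠ 1) (hq : q ≠ 1) (hr : r ≠ 1)

lemma isLiftable_cgen : (triangleMatrix hp hq hr).IsLiftable (cgen p q r) := by
  have h01 : (cgen p q r 0 * cgen p q r 1) ^ p = 1 :=
    PresentedGroup.one_of_mem (x := (.of 0 * .of 1) ^ p) (by simp [triRels])
  have h12 : (cgen p q r 1 * cgen p q r 2) ^ q = 1 :=
    PresentedGroup.one_of_mem (x := (.of 1 * .of 2) ^ q) (by simp [triRels])
  have h20 : (cgen p q r 2 * cgen p q r 0) ^ r = 1 :=
    PresentedGroup.one_of_mem (x := (.of 2 * .of 0) ^ r) (by simp [triRels])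
  have hself (i : Fin 3) : (cgen p q r i * cgen p q r i) ^ 1 = 1 :=
    (pow_one _).trans (cgen_mul_self i)
  intro i j
  fin_cases i <;> fin_cases j
  exacts [hself 0, h01, cgen_mul_cgen_pow_comm h20, cgen_mul_cgen_pow_comm h01, hself 1, h12, h20,
    cgen_mul_cgen_pow_comm h12, hself 2]

lemma lift_simple_eq_one_of_mem_triRels {x : FreeGroup (Fin 3)} (hx : x ∈ triRels p q r) :
    FreeGroup.lift (triangleMatrix hp hq hr).simple x = 1 := by
  let cs := (triangleMatrix hp hq hr).toCoxeterSystem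
  obtain rfl | rfl | rfl | rfl | rfl | rfl := hx <;>
    simp only [map_pow, map_mul, FreeGroup.lift_apply_of]
  exacts [cs.simple_sq 0, cs.simple_sq 1, cs.simple_sq 2, cs.simple_mul_simple_pow 0 1,
    cs.simple_mul_simple_pow 1 2, cs.simple_mul_simple_pow 2 0]

/-- The homomorphism `cgen p q r i ↦ s i` to the Coxeter group of `triangleMatrix`. -/
def triToGroup : Tri p q r →* (triangleMatrix hp hq hr).Group :=
  PresentedGroup.toGroup fun _ ↦ lift_simple_eq_one_of_mem_triRels hp hq hr

/-- The homomorphism `s i ↦ cgen p q r i` inverse to `triToGroup`. -/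
def groupToTri : (triangleMatrix hp hq hr).Group →* Tri p q r :=
  (triangleMatrix hp hq hr).toCoxeterSystem.lift ⟨cgen p q r, isLiftable_cgen hp hq hr⟩

lemma triToGroup_cgen (i : Fin 3) :
    triToGroup hp hq hr (cgen p q r i) = (triangleMatrix hp hq hr).simple i :=
  PresentedGroup.toGroup.of _

lemma groupToTri_simple (i : Fin 3) :
    groupToTri hp hq hr ((triangleMatrix hp hq hr).simple i) = cgen p q r i :=
  (triangleMatrix hp hq hr).toCoxeterSystem.lift_apply_simple (isLiftable_cgen hp hq hr) i

/-- `Tri p q r` as a Coxeter group, with simple reflections `cgen p q r`. -/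
def triangleCoxeterSystem : CoxeterSystem (triangleMatrix hp hq hr) (Tri p q r) where
  mulEquiv := MonoidHom.toMulEquiv (triToGroup hp hq hr) (groupToTri hp hq hr)
    (PresentedGroup.ext fun i ↦
      (congrArg _ (triToGroup_cgen hp hq hr i)).trans (groupToTri_simple hp hq hr i))
    ((triangleMatrix hp hq hr).toCoxeterSystem.ext_simple fun i ↦
      (congrArg _ (groupToTri_simple hp hq hr i)).trans (triToGroup_cgen hp hq hr i))

lemma triangleCoxeterSystem_simple (i : Fin 3) :
    (triangleCoxeterSystem hp hq hr).simple i = cgen p q r i :=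
  groupToTri_simple hp hq hr i

lemma triangleLoop_triangleCoxeterSystem :
    triangleLoop (triangleCoxeterSystem hp hq hr) 0 1 2 =
      (cgen p q r 2 * cgen p q r 0) ^ (r / 2) * (cgen p q r 1 * cgen p q r 2) ^ (q / 2) *
        (cgen p q r 0 * cgen p q r 1) ^ (p / 2) := by
  simp only [triangleLoop, transporter, triangleCoxeterSystem_simple]
  rfl

end TriangleGroup

end

end CoxeterGeometry

open CoxeterGeometry in
theorem centralizer_all_odd_general (k l m : ℕ) (hk : 1 ≤ k) (hl : 1 ≤ l) (hm : 1 ≤ m) :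
    ∀ c₀ c₁ c₂ : Tri (2 * k + 1) (2 * l + 1) (2 * m + 1),
      c₀ = cgen _ _ _ 0 → c₁ = cgen _ _ _ 1 → c₂ = cgen _ _ _ 2 →
      IsConj c₀ c₁ ∧ IsConj c₁ c₂ ∧ IsConj c₀ c₂ ∧
      Subgroup.centralizer {c₀} =
        Subgroup.closure {c₀, (c₂ * c₀) ^ m * (c₁ * c₂) ^ l * (c₀ * c₁) ^ k} ∧
      orderOf c₀ = 2 ∧
      ¬ IsOfFinOrder ((c₂ * c₀) ^ m * (c₁ * c₂) ^ l * (c₀ * c₁) ^ k) ∧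
      Commute c₀ ((c₂ * c₀) ^ m * (c₁ * c₂) ^ l * (c₀ * c₁) ^ k) ∧
      Nonempty ((Subgroup.centralizer {c₀} : Subgroup _) ≃* Multiplicative (ZMod 2 × ℤ)) := by
  rintro _ _ _ rfl rfl rfl
  let cs := triangleCoxeterSystem (p := 2 * k + 1) (q := 2 * l + 1) (r := 2 * m + 1)
    (by lia) (by lia) (by lia)
  have hodd := odd_triangleMatrix (odd_two_mul_add_one k) (odd_two_mul_add_one l)
    (odd_two_mul_add_one m) (by lia) (by lia) (by lia)
  have hsimple : ∀ i, cs.simple i = cgen _ _ _ i := triangleCoxeterSystem_simple _ _ _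
  have hloop : (cgen _ _ _ 2 * cgen _ _ _ 0) ^ m * (cgen _ _ _ 1 * cgen _ _ _ 2) ^ l *
      (cgen _ _ _ 0 * cgen _ _ _ 1) ^ k = triangleLoop cs 0 1 2 := by
    rw [triangleLoop_triangleCoxeterSystem]
    congr <;> lia
  rw [hloop]
  simp only [← hsimple]
  have hconj (i j : Fin 3) (hij : i ≠ j) := isConj_simple cs (hodd hij)
  exact ⟨hconj 0 1 (by decide), hconj 1 2 (by decide), hconj 0 2 (by decide),
    centralizer_simple_zero hodd, orderOf_simple cs 0,
    not_isOfFinOrder_triangleLoop_zero hodd, commute_simple_zero_triangleLoop hodd,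
    hsimple 0 ▸ nonempty_centralizer_simple_zero_mulEquiv hodd⟩

/-- in `Δ(2k+1, 2l+1, 2m+1)` (all link periods odd), the canonical
reflections are pairwise conjugate, the centralizer of `c₀` is generated by `c₀` and
`w = (c₂c₀)^m (c₁c₂)^l (c₀c₁)^k`, and this centralizer is `ℤ/2 × ℤ`. -/
theorem centralizer_all_odd (k l m : ℕ) (hk : 1 ≤ k) (hl : 1 ≤ l) (hm : 1 ≤ m)
    (harea : (1 : ℚ) / (2 * k + 1) + 1 / (2 * l + 1) + 1 / (2 * m + 1) < 1) :
    ∀ c₀ c₁ c₂ : Tri (2 * k + 1) (2 * l + 1) (2 * m + 1),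
      c₀ = cgen _ _ _ 0 → c₁ = cgen _ _ _ 1 → c₂ = cgen _ _ _ 2 →
      IsConj c₀ c₁ ∧ IsConj c₁ c₂ ∧ IsConj c₀ c₂ ∧
      Subgroup.centralizer {c₀} =
        Subgroup.closure {c₀, (c₂ * c₀) ^ m * (c₁ * c₂) ^ l * (c₀ * c₁) ^ k} ∧
      orderOf c₀ = 2 ∧
      ¬ IsOfFinOrder ((c₂ * c₀) ^ m * (c₁ * c₂) ^ l * (c₀ * c₁) ^ k) ∧
      Commute c₀ ((c₂ * c₀) ^ m * (c₁ * c₂) ^ l * (c₀ * c₁) ^ k) ∧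
      Nonempty ((Subgroup.centralizer {c₀} : Subgroup _) ≃* Multiplicative (ZMod 2 × ℤ)) :=
  centralizer_all_odd_general k l m hk hl hm
end

section
/- Let k, l, m ≥ 1 be integers with 1/(2k) + 1/(2l+1) + 1/(2m+1) < 1, and let Δ = Δ(2k, 2l+1, 2m+1) with canonical generators c₀, c₁, c₂ (so the first link period is even and the other two are odd). Then c₀, c₁, c₂ are pairwise conjugate in Δ, and the centralizer of c₀ in Δ equals the subgroup generated by the three elements c₀, (c₀c₁)^k, and (c₂c₀)^m (c₁c₂)^l (c₁c₀)^k (c₂c₁)^l (c₀c₂)^m. -/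
/-!
Any element conjugating one simple reflection of a Coxeter group to another is a product of simple
reflections and of conjugators `(s_i s_j)^⌊m_ij / 2⌋` inside dihedral parabolic subgroups. This is
an induction on length: strip from `w` its largest right factor in the parabolic subgroup
`⟨s_i, s_r⟩`, where `s_r` is a right descent of `w`; by the exchange condition what is left
conjugates `s_i` or `s_r` to a simple reflection. The exchange condition comes from the parity of
the number of times a reflection occurs along a word, and the exact order `m_ij` of `s_i s_j` from
Tits' geometric representation.

Transporting these dihedral conjugators back to a fixed reflection `x` along chosen conjugators
`g_i` from `s_i` to `x` turns them into generators of the centralizer of `x`. In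
`Δ(2k, 2l + 1, 2m + 1)` the two odd edges join all three generators, and taking the `g_i` along them
makes every transported conjugator trivial except for those of the edge `2k`, one for each of its
two directions.
-/

section Dihedral

variable {G : Type*} [Group G] {a b : G}

theorem semiconjBy_mul_inv_of_mul_self (ha : a * a = 1) (hb : b * b = 1) :
    SemiconjBy a (a * b) (a * b)⁻¹ := by
  rw [SemiconjBy, mul_inv_rev, inv_eq_of_mul_eq_one_right ha, inv_eq_of_mul_eq_one_right hb,
    ← mul_assoc, ha, one_mul, mul_assoc, ha, mul_one]

theorem inv_mul_pow_of_mul_self (ha : a * a = 1) (hb : b * b = 1) (n : ℕ) :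
    ((a * b) ^ n)⁻¹ = (b * a) ^ n := by
  rw [← inv_pow, mul_inv_rev, inv_eq_of_mul_eq_one_right ha, inv_eq_of_mul_eq_one_right hb]

theorem semiconjBy_mul_zpow_left_iff (ha : a * a = 1) (hb : b * b = 1) (n : ℤ) :
    SemiconjBy ((a * b) ^ n) a a ↔ (a * b) ^ (2 * n) = 1 := by
  rw [SemiconjBy, ((semiconjBy_mul_inv_of_mul_self ha hb).zpow_right n).eq, mul_left_inj,
    inv_zpow, eq_inv_iff_mul_eq_one, ← zpow_add, ← two_mul]

theorem semiconjBy_mul_zpow_left_right_iff (ha : a * a = 1) (hb : b * b = 1) (n : ℤ) :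
    SemiconjBy ((a * b) ^ n) a b ↔ (a * b) ^ (2 * n + 1) = 1 := by
  have hb_mul : b * (a * b) ^ n = ((a * b) ^ (n + 1))⁻¹ * a := by
    rw [← inv_zpow, ← ((semiconjBy_mul_inv_of_mul_self ha hb).zpow_right _).eq, add_comm,
      zpow_one_add, ← mul_assoc, ← mul_assoc, ha, one_mul]
  rw [SemiconjBy, hb_mul, mul_left_inj, eq_inv_iff_mul_eq_one, ← zpow_add,
    show n + (n + 1) = 2 * n + 1 by ring]

theorem semiconjBy_mul_pow_left_right (ha : a * a = 1) (hb : b * b = 1) {n : ℕ}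
    (hn : (a * b) ^ (2 * n + 1) = 1) : SemiconjBy ((a * b) ^ n) a b := by
  rw [← zpow_natCast, semiconjBy_mul_zpow_left_right_iff ha hb]
  exact_mod_cast hn

theorem exists_zpow_of_mem_closure_pair (ha : a * a = 1) (hb : b * b = 1) {u : G}
    (hu : u ∈ Subgroup.closure {a, b}) : ∃ n : ℤ, u = (a * b) ^ n ∨ u = (a * b) ^ n * a := by
  have ha_inv : a⁻¹ = a := inv_eq_of_mul_eq_one_right ha
  have hb_inv : b⁻¹ = b := inv_eq_of_mul_eq_one_right hb
  have mul_right (x : G) (hx : ∃ n : ℤ, x = (a * b) ^ n ∨ x = (a * b) ^ n * a) (y : G)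
      (hy : y ∈ ({a, b} : Set G)) : ∃ n : ℤ, x * y = (a * b) ^ n ∨ x * y = (a * b) ^ n * a := by
    obtain ⟨n, rfl | rfl⟩ := hx <;> rcases hy with rfl | rfl
    · exact ⟨n, .inr rfl⟩
    · exact ⟨n - 1, .inr (by simp [zpow_sub_one, mul_assoc, ha_inv, hb_inv, ha])⟩
    · exact ⟨n, .inl (by rw [mul_assoc, ha, mul_one])⟩
    · exact ⟨n + 1, .inl (by rw [zpow_add_one, mul_assoc])⟩
  induction hu using Subgroup.closure_induction_right with
  | one => exact ⟨0, .inl (zpow_zero _).symm⟩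
  | mul_right x _ y hy ih => exact mul_right x ih y hy
  | mul_inv_cancel x _ y hy ih =>
    have hy_inv : y⁻¹ = y := by rcases hy with rfl | rfl <;> assumption
    rw [hy_inv]
    exact mul_right x ih y hy

end Dihedral

section Reflections

open Real Polynomial.Chebyshev

variable {V : Type*} [AddCommGroup V] [Module ℝ V] {x y : V} {f g : Module.Dual ℝ V} {c : ℝ}

theorem reflection_mul_reflection_pow_apply_left (hf : f x = 2) (hg : g y = 2)
    (hfy : f y = -2 * c) (hgx : g x = -2 * c) (n : ℕ) :
    ((Module.reflection hf * Module.reflection hg) ^ n) x =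
      (U ℝ (2 * n)).eval c • x + (U ℝ (2 * n - 1)).eval c • y := by
  induction n with
  | zero => simp
  | succ n ih =>
    have hU₁ : (U ℝ (2 * n + 1)).eval c = 2 * c * (U ℝ (2 * n)).eval c -
        (U ℝ (2 * n - 1)).eval c := by simp [U_add_one]
    have hU₂ : (U ℝ (2 * n + 2)).eval c = 2 * c * (U ℝ (2 * n + 1)).eval c -
        (U ℝ (2 * n)).eval c := by simp [U_add_two]
    rw [pow_succ', LinearEquiv.mul_apply, ih, LinearEquiv.mul_apply]
    simp only [Module.reflection_apply, map_add, map_sub, map_smul, hf, hg, hfy, hgx,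
      Nat.cast_add, Nat.cast_one, mul_add, mul_one,
      show (2 * n + 2 - 1 : ℤ) = 2 * n + 1 by ring, hU₂, hU₁]
    module

theorem reflection_mul_reflection_pow_apply_right (hf : f x = 2) (hg : g y = 2)
    (hfy : f y = -2 * c) (hgx : g x = -2 * c) (n : ℕ) :
    ((Module.reflection hf * Module.reflection hg) ^ n) y =
      -(U ℝ (2 * n - 1)).eval c • x - (U ℝ (2 * n - 2)).eval c • y := by
  induction n with
  | zero => simp
  | succ n ih =>
    have hU₁ : (U ℝ (2 * n)).eval c = 2 * c * (U ℝ (2 * n - 1)).eval c -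
        (U ℝ (2 * n - 2)).eval c := by
      simpa [sub_add, show (2 : ℤ) - 1 = 1 by rfl] using
        congrArg (Polynomial.eval c) (U_eq ℝ (2 * n))
    have hU₂ : (U ℝ (2 * n + 1)).eval c = 2 * c * (U ℝ (2 * n)).eval c -
        (U ℝ (2 * n - 1)).eval c := by simp [U_add_one]
    rw [pow_succ', LinearEquiv.mul_apply, ih, LinearEquiv.mul_apply]
    simp only [Module.reflection_apply, map_sub, map_smul, hf, hg, hfy, hgx,
      Nat.cast_add, Nat.cast_one, mul_add, mul_one, add_sub_cancel_right,
      show (2 * n + 2 - 1 : ℤ) = 2 * n + 1 by ring, hU₂, hU₁]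
    module

theorem exists_add_smul_add_smul_of_sq_ne_one (hf : f x = 2) (hg : g y = 2)
    (hfy : f y = -2 * c) (hgx : g x = -2 * c) (hc : c ^ 2 ≠ 1) (z : V) :
    ∃ (v : V) (α β : ℝ), f v = 0 ∧ g v = 0 ∧ z = v + α • x + β • y := by
  have hdet : 1 - c ^ 2 ≠ 0 := sub_ne_zero.2 hc.symm
  set α := (f z + c * g z) / (2 * (1 - c ^ 2)) with hα
  set β := (g z + c * f z) / (2 * (1 - c ^ 2)) with hβ
  refine ⟨z - α • x - β • y, α, β, ?_, ?_, by abel⟩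
  · simp only [map_sub, map_smul, hf, hfy, smul_eq_mul, hα, hβ]
    field_simp
    ring
  · simp only [map_sub, map_smul, hg, hgx, smul_eq_mul, hα, hβ]
    field_simp
    ring

theorem sin_pi_div_pos {n : ℕ} (hn : 2 ≤ n) : 0 < sin (π / n) := by
  have hn' : (1 : ℝ) < n := by exact_mod_cast hn
  exact sin_pos_of_pos_of_lt_pi (by positivity) (div_lt_self pi_pos hn')

theorem reflection_mul_reflection_pow_eq_one (hf : f x = 2) (hg : g y = 2) {n : ℕ} (hn : 2 ≤ n)
    (hfy : f y = -2 * cos (π / n)) (hgx : g x = -2 * cos (π / n)) :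
    (Module.reflection hf * Module.reflection hg) ^ n = 1 := by
  set r := Module.reflection hf * Module.reflection hg
  have hsin : sin (π / n) ≠ 0 := (sin_pi_div_pos hn).ne'
  have hU (j : ℤ) : (U ℝ j).eval (cos (π / n)) = sin ((j + 1) * (π / n)) / sin (π / n) :=
    eq_div_of_mul_eq hsin (U_real_cos _ j)
  have hangle : 2 * n * (π / n) = 2 * π := by field_simp
  have hx : (r ^ n) x = x := by
    rw [reflection_mul_reflection_pow_apply_left hf hg hfy hgx, hU, hU]
    push_cast
    rw [sub_add_cancel, add_mul, hangle, one_mul, add_comm (2 * π), sin_add_two_pi, sin_two_pi,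
      div_self hsin]
    simp
  have hy : (r ^ n) y = y := by
    rw [reflection_mul_reflection_pow_apply_right hf hg hfy hgx, hU, hU]
    push_cast
    rw [sub_add_cancel, show (2 * n - 2 + 1 : ℝ) * (π / n) = 2 * n * (π / n) - π / n by ring,
      hangle, sin_two_pi_sub, sin_two_pi, neg_div, div_self hsin]
    simp
  ext z
  have hcos : cos (π / n) ^ 2 ≠ 1 := by
    simpa [cos_sq', sub_eq_self] using hsin
  obtain ⟨v, α, β, hfv, hgv, rfl⟩ := exists_add_smul_add_smul_of_sq_ne_one hf hg hfy hgx hcos z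
  have hrv : r v = v := by
    simp [r, LinearEquiv.mul_apply, Module.reflection_apply, hfv, hgv]
  have hrnv : (r ^ n) v = v := by
    rw [LinearEquiv.pow_apply]
    exact Function.IsFixedPt.iterate hrv n
  rw [map_add, map_add, map_smul, map_smul, hrnv, hx, hy]
  rfl

theorem dvd_of_reflection_mul_reflection_pow_eq_one (hf : f x = 2) (hg : g y = 2) {m : ℕ}
    (hm : m ≠ 1) (hfy : f y = -2 * cos (π / m)) (hgx : g x = -2 * cos (π / m))
    (hxy : LinearIndependent ℝ ![x, y]) {n : ℕ}
    (hn : (Module.reflection hf * Module.reflection hg) ^ n = 1) : m ∣ n := by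
  have hx := reflection_mul_reflection_pow_apply_left hf hg hfy hgx n
  rw [hn] at hx
  have hcomb : ((U ℝ (2 * n)).eval (cos (π / m)) - 1) • x +
      (U ℝ (2 * n - 1)).eval (cos (π / m)) • y = 0 := by
    rw [sub_smul, one_smul, sub_add_eq_add_sub, sub_eq_zero]
    exact hx.symm
  obtain ⟨hUx, hUy⟩ := LinearIndependent.pair_iff.1 hxy _ _ hcomb
  rcases Nat.eq_zero_or_pos m with rfl | hm_pos
  · have hn_zero : n = 0 := by simpa [U_eval_one] using hUy
    simp [hn_zero]
  · have hsin : sin (π / m) ≠ 0 := (sin_pi_div_pos (by lia)).ne'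
    have hsin_two : sin (2 * n * (π / m)) = 0 := by
      simpa [hUy] using (U_real_cos (π / m) (2 * n - 1)).symm
    have hsin_add : sin (2 * n * (π / m) + π / m) = sin (π / m) := by
      simpa [sub_eq_zero.1 hUx, add_mul] using (U_real_cos (π / m) (2 * n)).symm
    obtain ⟨d, hd⟩ := sin_eq_zero_iff.1 hsin_two
    have hd_even : Even d := by
      by_contra hd_odd
      have hd_odd := Int.not_even_iff_odd.1 hd_odd
      rw [← hd, add_comm, sin_add_int_mul_pi, hd_odd.neg_one_zpow] at hsin_add
      exact hsin (by linarith)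
    obtain ⟨e, rfl⟩ := hd_even
    have hn_eq : (n : ℤ) = m * e := by
      field_simp at hd
      push_cast at hd
      have : (n : ℝ) = m * e := by linarith
      exact_mod_cast this
    exact_mod_cast Dvd.intro e hn_eq.symm

end Reflections

section TitsRepresentation

open Real

variable {B W : Type*} [Group W] {M : CoxeterMatrix B}

/-- The coroot `α_j ↦ -2 cos (π / M i j)` dual to the simple root `α_i`, where the simple roots are
the standard basis of `B →₀ ℝ`. If `M i j = 0`, that is, if `s_i s_j` has infinite order, the
convention `π / 0 = 0` yields the value `-2`. -/
noncomputable def simpleCoroot (M : CoxeterMatrix B) (i : B) : Module.Dual ℝ (B →₀ ℝ) :=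
  Finsupp.linearCombination ℝ fun j ↦ -2 * cos (π / M i j)

theorem simpleCoroot_single (M : CoxeterMatrix B) (i j : B) :
    simpleCoroot M i (Finsupp.single j 1) = -2 * cos (π / M i j) := by
  simp [simpleCoroot]

theorem simpleCoroot_single_self (M : CoxeterMatrix B) (i : B) :
    simpleCoroot M i (Finsupp.single i 1) = 2 := by
  simp [simpleCoroot_single]

/-- The image of the simple reflection `s_i` in the geometric representation of Tits. -/
noncomputable def titsReflection (M : CoxeterMatrix B) (i : B) : (B →₀ ℝ) ≃ₗ[ℝ] (B →₀ ℝ) :=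
  Module.reflection (simpleCoroot_single_self M i)

theorem isLiftable_titsReflection (M : CoxeterMatrix B) : M.IsLiftable (titsReflection M) := by
  intro i j
  obtain rfl | hij := eq_or_ne i j
  · rw [M.diagonal, pow_one]
    exact mul_eq_one_iff_eq_inv.2 (Module.reflection_inv (simpleCoroot_single_self M i)).symm
  · rcases Nat.eq_zero_or_pos (M i j) with hM | hM
    · rw [hM, pow_zero]
    · have hM_two : 2 ≤ M i j := by have := M.off_diagonal i j hij; lia
      refine reflection_mul_reflection_pow_eq_one _ _ hM_two (simpleCoroot_single M i j) ?_
      rw [simpleCoroot_single, M.symmetric]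

theorem orderOf_simple_mul_simple (cs : CoxeterSystem M W) (i j : B) :
    orderOf (cs.simple i * cs.simple j) = M i j := by
  refine Nat.dvd_antisymm (orderOf_dvd_of_pow_eq_one (cs.simple_mul_simple_pow i j)) ?_
  obtain rfl | hij := eq_or_ne i j
  · simp
  · have hindep : LinearIndependent ℝ ![(Finsupp.single i 1 : B →₀ ℝ), Finsupp.single j 1] := by
      have hinj : Function.Injective ![i, j] := by
        simpa [Function.Injective, Fin.forall_fin_two] using ⟨hij, hij.symm⟩
      convert (Finsupp.linearIndependent_single_one ℝ B).comp _ hinj using 1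
      ext x : 1
      fin_cases x <;> rfl
    refine dvd_of_reflection_mul_reflection_pow_eq_one (simpleCoroot_single_self M i)
      (simpleCoroot_single_self M j) (M.off_diagonal i j hij) (simpleCoroot_single M i j) ?_
      hindep ?_
    · rw [simpleCoroot_single, M.symmetric]
    · have hlift := congrArg (cs.lift ⟨_, isLiftable_titsReflection M⟩)
        (pow_orderOf_eq_one (cs.simple i * cs.simple j))
      rwa [map_pow, map_mul, cs.lift_apply_simple, cs.lift_apply_simple, map_one] at hlift

end TitsRepresentation

section SignedConj

variable {G : Type*} [Group G] {a b : G}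

open Classical in
/-- The permutation of `G × ZMod 2` given by conjugation by `a` on `G`, together with a sign change
over `a` itself. For the simple reflections of a Coxeter group these permutations define the action
on roots whose sign changes count inversions. -/
noncomputable def signedConj (a : G) : Equiv.Perm (G × ZMod 2) where
  toFun p := (a * p.1 * a⁻¹, p.2 + if p.1 = a then 1 else 0)
  invFun p := (a⁻¹ * p.1 * a, p.2 + if p.1 = a then 1 else 0)
  left_inv := by
    rintro ⟨t, e⟩
    ext
    · simp [mul_assoc]
    · simp [mul_inv_eq_iff_eq_mul, add_assoc, CharTwo.add_self_eq_zero]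
  right_inv := by
    rintro ⟨t, e⟩
    ext
    · simp [mul_assoc]
    · simp [mul_assoc, inv_mul_eq_iff_eq_mul, add_assoc, CharTwo.add_self_eq_zero]

open Classical in
theorem signedConj_apply (a t : G) (e : ZMod 2) :
    signedConj a (t, e) = (a * t * a⁻¹, e + if t = a then 1 else 0) :=
  rfl

open Classical in
theorem signedConj_mul_signedConj_pow_apply (ha : a * a = 1) (hb : b * b = 1) (n : ℕ) (t : G)
    (e : ZMod 2) :
    ((signedConj a * signedConj b) ^ n) (t, e) =
      ((a * b) ^ n * t * ((a * b) ^ n)⁻¹,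
        e + ∑ r ∈ Finset.range (2 * n), if t = b * (a * b) ^ r then 1 else 0) := by
  induction n with
  | zero => simp
  | succ n ih =>
    have hb_pow (r : ℕ) : b * (a * b) ^ r = ((a * b) ^ r)⁻¹ * b := by
      rw [inv_mul_pow_of_mul_self ha hb]
      exact SemiconjBy.pow_right (mul_assoc b a b).symm r
    have hconj (d : ℕ) : (a * b) ^ n * t * ((a * b) ^ n)⁻¹ = b * (a * b) ^ d ↔
        t = b * (a * b) ^ (2 * n + d) := by
      rw [mul_inv_eq_iff_eq_mul, ← eq_inv_mul_iff_mul_eq, two_mul, add_assoc, pow_add _ n (n + d),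
        ← mul_assoc b, hb_pow n, add_comm n d, pow_add]
      simp only [mul_assoc]
    have hconj_b := hconj 0
    rw [pow_zero, mul_one, add_zero] at hconj_b
    have hconj_a : b * ((a * b) ^ n * t * ((a * b) ^ n)⁻¹) * b⁻¹ = a ↔
        t = b * (a * b) ^ (2 * n + 1) := by
      rw [← hconj 1, pow_one, mul_inv_eq_iff_eq_mul, ← eq_inv_mul_iff_mul_eq,
        inv_eq_of_mul_eq_one_right hb]
    rw [pow_succ', Equiv.Perm.mul_apply, ih, Equiv.Perm.mul_apply, signedConj_apply,
      signedConj_apply]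
    simp only [hconj_a, hconj_b]
    rw [mul_add, mul_one, Finset.sum_range_succ, Finset.sum_range_succ]
    ext
    · simp only [pow_succ' (a * b) n, mul_inv_rev, mul_assoc]
    · simp only [add_assoc]

theorem signedConj_mul_signedConj_pow_eq_one (ha : a * a = 1) (hb : b * b = 1) {n : ℕ}
    (hn : (a * b) ^ n = 1) : (signedConj a * signedConj b) ^ n = 1 := by
  classical
  ext1 ⟨t, e⟩
  rw [signedConj_mul_signedConj_pow_apply ha hb, hn, two_mul, Finset.sum_range_add]
  simp [pow_add, hn, CharTwo.add_self_eq_zero]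

end SignedConj

section InversionParity

variable {B W : Type*} [Group W] {M : CoxeterMatrix B} (cs : CoxeterSystem M W)

theorem isLiftable_signedConj_simple : M.IsLiftable fun i ↦ signedConj (cs.simple i) := fun i j ↦
  signedConj_mul_signedConj_pow_eq_one (cs.simple_mul_simple_self i) (cs.simple_mul_simple_self j)
    (cs.simple_mul_simple_pow i j)

/-- The action of a Coxeter group on `W × ZMod 2` in which the simple reflections act by signed
conjugation. -/
noncomputable def signedAction : W →* Equiv.Perm (W × ZMod 2) :=
  cs.lift ⟨_, isLiftable_signedConj_simple cs⟩

/-- The parity of the number of times `t` occurs in the right inversion sequence of a word for `w`.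
Defining it through `signedAction` makes it independent of the word. -/
noncomputable def inversionParity (w t : W) : ZMod 2 :=
  (signedAction cs w (t, 0)).2

theorem signedAction_simple (i : B) : signedAction cs (cs.simple i) = signedConj (cs.simple i) :=
  cs.lift_apply_simple _ i

theorem signedAction_apply (w t : W) (e : ZMod 2) :
    signedAction cs w (t, e) = (w * t * w⁻¹, e + inversionParity cs w t) := by
  induction w using cs.simple_induction_right generalizing t e with
  | one => simp [inversionParity]
  | mul_simple_right w i ih =>
    rw [inversionParity, map_mul, Equiv.Perm.mul_apply, Equiv.Perm.mul_apply,
      signedAction_simple, signedConj_apply, signedConj_apply, ih, ih]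
    simp only [mul_assoc, mul_inv_rev, zero_add, add_assoc]

theorem inversionParity_mul (w v t : W) :
    inversionParity cs (w * v) t =
      inversionParity cs v t + inversionParity cs w (v * t * v⁻¹) := by
  rw [inversionParity, map_mul, Equiv.Perm.mul_apply, signedAction_apply, signedAction_apply,
    zero_add]

open Classical in
theorem inversionParity_simple (i : B) (t : W) :
    inversionParity cs (cs.simple i) t = if t = cs.simple i then 1 else 0 := by
  rw [inversionParity, signedAction_simple, signedConj_apply, zero_add]

open Classical in
theorem inversionParity_wordProd (ω : List B) (t : W) :
    inversionParity cs (cs.wordProd ω) t = (cs.rightInvSeq ω).count t := by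
  induction ω with
  | nil => simp [inversionParity]
  | cons i ω ih =>
    have hconj : cs.wordProd ω * t * (cs.wordProd ω)⁻¹ = cs.simple i ↔
        (cs.wordProd ω)⁻¹ * cs.simple i * cs.wordProd ω = t := by
      rw [mul_inv_eq_iff_eq_mul, mul_assoc, inv_mul_eq_iff_eq_mul, eq_comm]
    rw [cs.wordProd_cons, inversionParity_mul, ih, inversionParity_simple,
      CoxeterSystem.rightInvSeq, List.count_cons]
    simp [hconj]

theorem exists_wordProd_eraseIdx_of_inversionParity_ne_zero {ω : List B} {t : W}
    (ht : inversionParity cs (cs.wordProd ω) t ≠ 0) :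
    ∃ j < ω.length, cs.wordProd ω * t = cs.wordProd (ω.eraseIdx j) := by
  classical
  have ht_mem : t ∈ cs.rightInvSeq ω := by
    by_contra ht_notMem
    simp [inversionParity_wordProd, List.count_eq_zero_of_not_mem ht_notMem] at ht
  obtain ⟨j, hj, rfl⟩ := List.mem_iff_getElem.1 ht_mem
  rw [← List.getD_eq_getElem _ 1 hj, cs.wordProd_mul_getD_rightInvSeq]
  exact ⟨j, by simpa using hj, rfl⟩

theorem length_mul_lt_of_inversionParity_ne_zero {w t : W} (ht : inversionParity cs w t ≠ 0) :
    cs.length (w * t) < cs.length w := by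
  obtain ⟨ω, hω, rfl⟩ := cs.exists_isReduced w
  obtain ⟨j, hj, hωt⟩ := exists_wordProd_eraseIdx_of_inversionParity_ne_zero cs ht
  rw [hωt, hω.eq]
  calc cs.length (cs.wordProd (ω.eraseIdx j)) ≤ (ω.eraseIdx j).length := cs.length_wordProd_le _
    _ < ω.length := by rw [List.length_eraseIdx_of_lt hj]; lia

theorem inversionParity_simple_ne_zero_iff {w : W} {i : B} :
    inversionParity cs w (cs.simple i) ≠ 0 ↔ cs.IsRightDescent w i := by
  refine ⟨length_mul_lt_of_inversionParity_ne_zero cs, fun hi hzero ↦ ?_⟩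
  have hparity : inversionParity cs w (cs.simple i) =
      1 + inversionParity cs (w * cs.simple i) (cs.simple i) := by
    conv_lhs => rw [← cs.simple_mul_simple_cancel_right (w := w) i]
    rw [inversionParity_mul, inversionParity_simple, if_pos rfl, mul_inv_cancel_right]
  have hne : inversionParity cs (w * cs.simple i) (cs.simple i) ≠ 0 := by
    intro h
    simp [hzero, h] at hparity
  have hlt := length_mul_lt_of_inversionParity_ne_zero cs hne
  rw [cs.simple_mul_simple_cancel_right] at hlt
  exact hlt.asymm hi

theorem exists_isReduced_sublist (ω : List B) :
    ∃ ω', ω'.Sublist ω ∧ cs.IsReduced ω' ∧ cs.wordProd ω' = cs.wordProd ω := by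
  induction ω using List.reverseRecOn with
  | nil => exact ⟨[], .slnil, by simp [CoxeterSystem.IsReduced], rfl⟩
  | append_singleton ω i ih =>
    obtain ⟨ω', hsub, hred, hprod⟩ := ih
    have hprod_append : cs.wordProd (ω ++ [i]) = cs.wordProd ω' * cs.simple i := by
      rw [cs.wordProd_append, hprod, cs.wordProd_singleton]
    rw [hprod_append]
    by_cases hi : cs.IsRightDescent (cs.wordProd ω') i
    · obtain ⟨j, hj, hωj⟩ := exists_wordProd_eraseIdx_of_inversionParity_ne_zero cs
        ((inversionParity_simple_ne_zero_iff cs).2 hi)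
      refine ⟨ω'.eraseIdx j, ((List.eraseIdx_sublist _ _).trans hsub).trans
        (List.sublist_append_left _ _), ?_, hωj.symm⟩
      have hlen := cs.isRightDescent_iff.1 hi
      rw [hωj, hred.eq] at hlen
      rw [CoxeterSystem.IsReduced, List.length_eraseIdx_of_lt hj]
      lia
    · refine ⟨ω' ++ [i], hsub.append (.refl _), ?_, by rw [cs.wordProd_append,
        cs.wordProd_singleton]⟩
      rw [CoxeterSystem.IsReduced, cs.wordProd_append, cs.wordProd_singleton,
        cs.not_isRightDescent_iff.1 hi, hred.eq, List.length_append, List.length_singleton]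

theorem exists_wordProd_eq_of_mem_closure {I : Set B} {p : W}
    (hp : p ∈ Subgroup.closure (cs.simple '' I)) : ∃ ω, (∀ i ∈ ω, i ∈ I) ∧ p = cs.wordProd ω := by
  induction hp using Subgroup.closure_induction_right with
  | one => exact ⟨[], by simp⟩
  | mul_right p _ s hs ih =>
    obtain ⟨ω, hω, rfl⟩ := ih
    obtain ⟨i, hi, rfl⟩ := hs
    refine ⟨ω ++ [i], by grind, by rw [cs.wordProd_append, cs.wordProd_singleton]⟩
  | mul_inv_cancel p _ s hs ih =>
    obtain ⟨ω, hω, rfl⟩ := ih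
    obtain ⟨i, hi, rfl⟩ := hs
    refine ⟨ω ++ [i], by grind, by rw [cs.wordProd_append, cs.wordProd_singleton, cs.inv_simple]⟩

theorem exists_isRightDescent_of_mem_closure {I : Set B} {p : W}
    (hp : p ∈ Subgroup.closure (cs.simple '' I)) (hp_ne : p ≠ 1) :
    ∃ i ∈ I, cs.IsRightDescent p i := by
  obtain ⟨ω, hωI, rfl⟩ := exists_wordProd_eq_of_mem_closure cs hp
  obtain ⟨ω', hsub, hred, hprod⟩ := exists_isReduced_sublist cs ω
  rw [← hprod] at hp_ne ⊢
  obtain rfl | ⟨τ, i, rfl⟩ := ω'.eq_nil_or_concat'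
  · simp at hp_ne
  · refine ⟨i, hωI i (hsub.subset (by simp)), ?_⟩
    rw [CoxeterSystem.IsRightDescent, hred.eq, cs.wordProd_append, cs.wordProd_singleton,
      cs.simple_mul_simple_cancel_right, List.length_append, List.length_singleton]
    exact Nat.lt_succ_of_le (cs.length_wordProd_le τ)

end InversionParity

section SimpleConjugator

variable {B W : Type*} [Group W] {M : CoxeterMatrix B} (cs : CoxeterSystem M W)

theorem exists_mul_eq_forall_length_le (w : W) (H : Subgroup W) :
    ∃ v, ∃ u ∈ H, w = v * u ∧ ∀ q ∈ H, cs.length v ≤ cs.length (v * q) := by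
  obtain ⟨q₀, hq₀, hmin⟩ := WellFounded.has_min (measure fun q ↦ cs.length (w * q)).wf
    (H : Set W) ⟨1, H.one_mem⟩
  refine ⟨w * q₀, q₀⁻¹, H.inv_mem hq₀, (mul_inv_cancel_right w q₀).symm, fun q hq ↦ ?_⟩
  rw [mul_assoc]
  exact not_lt.1 (hmin _ (H.mul_mem hq₀ hq))

theorem exists_eq_simple_of_semiconjBy_of_forall_length_le {I : Set B} {v p : W} {j : B}
    (hv : ∀ q ∈ Subgroup.closure (cs.simple '' I), cs.length v ≤ cs.length (v * q))
    (hp : p ∈ Subgroup.closure (cs.simple '' I)) (hvp : SemiconjBy v p (cs.simple j)) :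
    ∃ i ∈ I, p = cs.simple i := by
  classical
  have hparity_v (q : W) (hq : q ∈ Subgroup.closure (cs.simple '' I)) :
      inversionParity cs v q = 0 := by
    by_contra hne
    exact (hv q hq).not_gt (length_mul_lt_of_inversionParity_ne_zero cs hne)
  have hp_ne : p ≠ 1 := by
    rintro rfl
    have hj : cs.simple j = 1 := by simpa [SemiconjBy] using hvp
    simpa [hj] using cs.length_simple j
  obtain ⟨i, hi, hdescent⟩ := exists_isRightDescent_of_mem_closure cs hp hp_ne
  have hi_mem : cs.simple i ∈ Subgroup.closure (cs.simple '' I) :=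
    Subgroup.subset_closure (Set.mem_image_of_mem _ hi)
  have hpi_mem := Subgroup.mul_mem _ (Subgroup.mul_mem _ hp hi_mem) (Subgroup.inv_mem _ hp)
  have hparity := congrArg (inversionParity cs · (cs.simple i)) hvp.eq
  simp only [inversionParity_mul, hparity_v _ hi_mem, hparity_v _ hpi_mem, add_zero,
    zero_add] at hparity
  have hconj : v * cs.simple i * v⁻¹ = cs.simple j := by
    by_contra hne
    rw [inversionParity_simple, if_neg hne] at hparity
    exact (inversionParity_simple_ne_zero_iff cs).2 hdescent hparity
  refine ⟨i, hi, mul_left_cancel (a := v) ?_⟩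
  rw [hvp.eq, mul_inv_eq_iff_eq_mul.1 hconj]

open Classical in
/-- The end of the edge that leaves `i` through the dihedral group `⟨s_i, s_j⟩`, whose element
`(s_i s_j) ^ ⌊M i j / 2⌋` conjugates `s_i` to `s_j` or to itself according to the parity of
`M i j`. -/
noncomputable def edgeTarget (M : CoxeterMatrix B) (i j : B) : B :=
  if Odd (M i j) then j else i

/-- The conjugator from `s_i` to `s_(edgeTarget M i j)` in the dihedral group `⟨s_i, s_j⟩`; it is
`1` if `s_i s_j` has infinite order. -/
def edgeElement (i j : B) : W :=
  (cs.simple i * cs.simple j) ^ (M i j / 2)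

theorem semiconjBy_edgeElement (i j : B) :
    SemiconjBy (edgeElement cs i j) (cs.simple i) (cs.simple (edgeTarget M i j)) := by
  have hi := cs.simple_mul_simple_self i
  have hj := cs.simple_mul_simple_self j
  have hpow := cs.simple_mul_simple_pow i j
  rw [edgeElement, edgeTarget]
  split_ifs with hodd
  · apply semiconjBy_mul_pow_left_right hi hj
    rwa [Nat.two_mul_div_two_add_one_of_odd hodd]
  · rw [← zpow_natCast, semiconjBy_mul_zpow_left_iff hi hj]
    rw [← Nat.two_mul_div_two_of_even (Nat.not_odd_iff_even.1 hodd)] at hpow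
    exact_mod_cast hpow

/-- The arrows `i ⟶ j`, for `i j : B`, of the groupoid generated by the simple reflections
`s_i : i ⟶ i` and the dihedral conjugators `edgeElement cs i j`, as elements of `W`. Inverses are
omitted since the set of generators is closed under them. -/
inductive SimpleConjugator : B → B → W → Prop
  | one (i : B) : SimpleConjugator i i 1
  | simple (i : B) : SimpleConjugator i i (cs.simple i)
  | edge (i j : B) : SimpleConjugator i (edgeTarget M i j) (edgeElement cs i j)
  | mul {i j k : B} {w v : W} (hw : SimpleConjugator i j w) (hv : SimpleConjugator j k v) :
      SimpleConjugator i k (v * w)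

theorem dvd_or_even_and_modEq_half_of_dvd_two_mul {m : ℕ} {n : ℤ} (h : (m : ℤ) ∣ 2 * n) :
    (m : ℤ) ∣ n ∨ Even m ∧ n ≡ (m / 2 : ℕ) [ZMOD m] := by
  obtain ⟨c, hc⟩ := h
  obtain ⟨d, rfl | rfl⟩ := c.even_or_odd'
  · exact .inl ⟨d, by linarith⟩
  · have hm : Even m := by
      have heven : Even ((m : ℤ) * (2 * d + 1)) := ⟨n, by rw [← hc, two_mul]⟩
      exact (Int.even_coe_nat m).1
        ((Int.even_mul.1 heven).resolve_right (Int.not_even_two_mul_add_one d))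
    refine .inr ⟨hm, (Int.modEq_iff_dvd.2 ⟨d, ?_⟩).symm⟩
    have hm_half : (2 : ℤ) * (m / 2 : ℕ) = m := mod_cast Nat.two_mul_div_two_of_even hm
    linarith

theorem odd_and_modEq_half_of_dvd_two_mul_add_one {m : ℕ} {n : ℤ} (h : (m : ℤ) ∣ 2 * n + 1) :
    Odd m ∧ n ≡ (m / 2 : ℕ) [ZMOD m] := by
  obtain ⟨c, hc⟩ := h
  have hodd : Odd ((m : ℤ) * c) := ⟨n, hc.symm⟩
  obtain ⟨hm, d, rfl⟩ := Int.odd_mul.1 hodd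
  rw [Int.odd_coe_nat] at hm
  refine ⟨hm, (Int.modEq_iff_dvd.2 ⟨d, ?_⟩).symm⟩
  have hm_half : (2 : ℤ) * (m / 2 : ℕ) + 1 = m := mod_cast Nat.two_mul_div_two_add_one_of_odd hm
  linarith

theorem simpleConjugator_zpow_of_semiconjBy {i r t : B} {n : ℤ} (ht : t = i ∨ t = r)
    (hn : SemiconjBy ((cs.simple i * cs.simple r) ^ n) (cs.simple i) (cs.simple t)) :
    SimpleConjugator cs i t ((cs.simple i * cs.simple r) ^ n) := by
  have hi := cs.simple_mul_simple_self i
  have hr := cs.simple_mul_simple_self r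
  have hedge := SimpleConjugator.edge (cs := cs) i r
  rw [edgeElement, edgeTarget, ← zpow_natCast] at hedge
  rcases ht with rfl | rfl
  · rw [semiconjBy_mul_zpow_left_iff hi hr, ← orderOf_dvd_iff_zpow_eq_one,
      orderOf_simple_mul_simple] at hn
    obtain hdvd | ⟨heven, hmod⟩ := dvd_or_even_and_modEq_half_of_dvd_two_mul hn
    · rw [← orderOf_simple_mul_simple cs, orderOf_dvd_iff_zpow_eq_one] at hdvd
      exact hdvd ▸ .one t
    · rw [← orderOf_simple_mul_simple cs, ← zpow_eq_zpow_iff_modEq,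
        orderOf_simple_mul_simple] at hmod
      rw [if_neg (Nat.not_odd_iff_even.2 heven)] at hedge
      rwa [hmod]
  · rw [semiconjBy_mul_zpow_left_right_iff hi hr, ← orderOf_dvd_iff_zpow_eq_one,
      orderOf_simple_mul_simple] at hn
    obtain ⟨hodd, hmod⟩ := odd_and_modEq_half_of_dvd_two_mul_add_one hn
    rw [← orderOf_simple_mul_simple cs, ← zpow_eq_zpow_iff_modEq,
      orderOf_simple_mul_simple] at hmod
    rw [if_pos hodd] at hedge
    rwa [hmod]

theorem simpleConjugator_of_mem_closure_pair {i r t : B} {u : W}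
    (hu : u ∈ Subgroup.closure {cs.simple i, cs.simple r}) (ht : t = i ∨ t = r)
    (hut : SemiconjBy u (cs.simple i) (cs.simple t)) : SimpleConjugator cs i t u := by
  obtain ⟨n, rfl | rfl⟩ := exists_zpow_of_mem_closure_pair (cs.simple_mul_simple_self i)
    (cs.simple_mul_simple_self r) hu
  · exact simpleConjugator_zpow_of_semiconjBy cs ht hut
  · refine .mul (.simple i) (simpleConjugator_zpow_of_semiconjBy cs ht ?_)
    simpa [mul_assoc] using hut.mul_left (Commute.refl (cs.simple i))

theorem simpleConjugator_of_semiconjBy {w : W} {i j : B}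
    (h : SemiconjBy w (cs.simple i) (cs.simple j)) : SimpleConjugator cs i j w := by
  induction hn : cs.length w using Nat.strong_induction_on generalizing w i with
  | h n ih =>
  obtain rfl | hw := eq_or_ne w 1
  · exact simpleConjugator_of_mem_closure_pair cs (one_mem _) (.inr rfl) h
  obtain ⟨r, hr⟩ := cs.exists_rightDescent_of_ne_one hw
  set H := Subgroup.closure (cs.simple '' {i, r}) with hH
  have hi_mem : cs.simple i ∈ H := Subgroup.subset_closure (by simp)
  have hr_mem : cs.simple r ∈ H := Subgroup.subset_closure (by simp)
  obtain ⟨v, u, hu, rfl, hv⟩ := exists_mul_eq_forall_length_le cs w H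
  have hvu : SemiconjBy v (u * cs.simple i * u⁻¹) (cs.simple j) := by
    rw [SemiconjBy, ← mul_assoc, ← mul_assoc, h.eq, ← mul_assoc, mul_inv_cancel_right]
  obtain ⟨t, ht, hut⟩ := exists_eq_simple_of_semiconjBy_of_forall_length_le cs hv
    (H.mul_mem (H.mul_mem hu hi_mem) (H.inv_mem hu)) hvu
  have hv_lt : cs.length v < n := by
    refine (hv _ (H.mul_mem hu hr_mem)).trans_lt ?_
    rw [← mul_assoc, ← hn]
    exact hr
  rw [hut] at hvu
  refine .mul (simpleConjugator_of_mem_closure_pair cs ?_ ht (mul_inv_eq_iff_eq_mul.1 hut))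
    (ih _ hv_lt hvu rfl)
  rwa [hH, Set.image_pair] at hu

end SimpleConjugator

section Centralizer

variable {B W : Type*} [Group W] {M : CoxeterMatrix B} (cs : CoxeterSystem M W)

/-- The element of the centralizer of `x` that goes from `x` to `s_i`, along the edge
`edgeElement cs i j`, and back to `x`, where `g i` is a conjugator from `s_i` to `x`. -/
noncomputable def edgeLoop (g : B → W) (i j : B) : W :=
  g (edgeTarget M i j) * edgeElement cs i j * (g i)⁻¹

variable {g : B → W} {x : W}

theorem SimpleConjugator.mul_mul_inv_mem_closure (hg : ∀ i, SemiconjBy (g i) (cs.simple i) x)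
    {i j : B} {w : W} (hw : SimpleConjugator cs i j w) :
    g j * w * (g i)⁻¹ ∈
      Subgroup.closure (insert x (Set.range (Function.uncurry (edgeLoop cs g)))) := by
  induction hw with
  | one i => simp [one_mem]
  | simple i =>
    rw [(hg i).eq, mul_inv_cancel_right]
    exact Subgroup.subset_closure (Set.mem_insert _ _)
  | edge i j => exact Subgroup.subset_closure (Set.mem_insert_of_mem _ ⟨(i, j), rfl⟩)
  | @mul i j k w v _ _ ihw ihv => simpa [mul_assoc] using mul_mem ihv ihw

theorem centralizer_eq_closure_edgeLoop [Nonempty B]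
    (hg : ∀ i, SemiconjBy (g i) (cs.simple i) x) :
    Subgroup.centralizer {x} =
      Subgroup.closure (insert x (Set.range (Function.uncurry (edgeLoop cs g)))) := by
  apply le_antisymm
  · intro z hz
    obtain ⟨i⟩ := ‹Nonempty B›
    have hz_conj : SemiconjBy ((g i)⁻¹ * z * g i) (cs.simple i) (cs.simple i) :=
      ((hg i).inv_symm_left.mul_left (Subgroup.mem_centralizer_singleton_iff.1 hz)).mul_left (hg i)
    simpa [mul_assoc] using
      (simpleConjugator_of_semiconjBy cs hz_conj).mul_mul_inv_mem_closure cs hg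
  · rw [Subgroup.closure_le]
    rintro _ (rfl | ⟨⟨i, j⟩, rfl⟩) <;> rw [SetLike.mem_coe, Subgroup.mem_centralizer_singleton_iff]
    exact ((hg _).mul_left (semiconjBy_edgeElement cs i j)).mul_left (hg i).inv_symm_left

end Centralizer

section EdgeLoop

variable {B W : Type*} [Group W] {M : CoxeterMatrix B} (cs : CoxeterSystem M W)
variable (g : B → W) {i j : B} {n : ℕ}

theorem edgeLoop_of_eq_two_mul (h : M i j = 2 * n) :
    edgeLoop cs g i j = g i * (cs.simple i * cs.simple j) ^ n * (g i)⁻¹ := by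
  rw [edgeLoop, edgeTarget, edgeElement, h, if_neg (Nat.not_odd_iff_even.2 (even_two_mul n)),
    Nat.mul_div_cancel_left n two_pos]

theorem edgeLoop_of_eq_two_mul_add_one (h : M i j = 2 * n + 1) :
    edgeLoop cs g i j = g j * (cs.simple i * cs.simple j) ^ n * (g i)⁻¹ := by
  rw [edgeLoop, edgeTarget, edgeElement, h, if_pos (odd_two_mul_add_one n),
    Nat.mul_add_div two_pos, Nat.div_eq_of_lt one_lt_two, add_zero]

theorem edgeLoop_self (i : B) : edgeLoop cs g i i = 1 := by
  rw [edgeLoop_of_eq_two_mul_add_one cs g (n := 0) (M.diagonal i), pow_zero, mul_one,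
    mul_inv_cancel]

end EdgeLoop

section Triangle

variable {k' l' m' : ℕ}

theorem cgen_mul_self (j : Fin 3) : cgen k' l' m' j * cgen k' l' m' j = 1 := by
  rw [← sq]
  exact PresentedGroup.one_of_mem (rels := triRels k' l' m') (by fin_cases j <;> simp [triRels])

theorem cgen_zero_mul_cgen_one_pow : (cgen k' l' m' 0 * cgen k' l' m' 1) ^ k' = 1 :=
  PresentedGroup.one_of_mem (rels := triRels k' l' m') (by simp [triRels])

theorem cgen_one_mul_cgen_two_pow : (cgen k' l' m' 1 * cgen k' l' m' 2) ^ l' = 1 :=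
  PresentedGroup.one_of_mem (rels := triRels k' l' m') (by simp [triRels])

theorem cgen_two_mul_cgen_zero_pow : (cgen k' l' m' 2 * cgen k' l' m' 0) ^ m' = 1 :=
  PresentedGroup.one_of_mem (rels := triRels k' l' m') (by simp [triRels])

theorem inv_cgen_mul_cgen_pow (i j : Fin 3) (n : ℕ) :
    ((cgen k' l' m' i * cgen k' l' m' j) ^ n)⁻¹ = (cgen k' l' m' j * cgen k' l' m' i) ^ n :=
  inv_mul_pow_of_mul_self (cgen_mul_self i) (cgen_mul_self j) n

/-- The Coxeter matrix of `Δ(k', l', m')`. A parameter `0` stands for an infinite order, both here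
and in the presentation. -/
def triCoxeterMatrix (hk : k' ≠ 1) (hl : l' ≠ 1) (hm : m' ≠ 1) : CoxeterMatrix (Fin 3) where
  M := !![1, k', m'; k', 1, l'; m', l', 1]
  isSymm := by ext i j; fin_cases i <;> fin_cases j <;> rfl
  diagonal i := by fin_cases i <;> rfl
  off_diagonal i j hij := by fin_cases i <;> fin_cases j <;> simp_all

variable (hk : k' ≠ 1) (hl : l' ≠ 1) (hm : m' ≠ 1)

theorem isLiftable_cgen : (triCoxeterMatrix hk hl hm).IsLiftable (cgen k' l' m') := by
  have symm {i j : Fin 3} {n : ℕ} (h : (cgen k' l' m' i * cgen k' l' m' j) ^ n = 1) :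
      (cgen k' l' m' j * cgen k' l' m' i) ^ n = 1 := by
    rw [← inv_cgen_mul_cgen_pow, h, inv_one]
  have diag (i : Fin 3) : (cgen k' l' m' i * cgen k' l' m' i) ^ 1 = 1 := by
    rw [pow_one, cgen_mul_self]
  intro i j
  fin_cases i <;> fin_cases j
  exacts [diag 0, cgen_zero_mul_cgen_one_pow, symm cgen_two_mul_cgen_zero_pow,
    symm cgen_zero_mul_cgen_one_pow, diag 1, cgen_one_mul_cgen_two_pow,
    cgen_two_mul_cgen_zero_pow, symm cgen_one_mul_cgen_two_pow, diag 2]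

theorem lift_simple_eq_one_of_mem_triRels {r : FreeGroup (Fin 3)} (hr : r ∈ triRels k' l' m') :
    FreeGroup.lift (triCoxeterMatrix hk hl hm).simple r = 1 := by
  have hpow := (triCoxeterMatrix hk hl hm).toCoxeterSystem.simple_mul_simple_pow
  have hsq := (triCoxeterMatrix hk hl hm).toCoxeterSystem.simple_sq
  simp only [CoxeterMatrix.toCoxeterSystem_simple] at hpow hsq
  rcases hr with rfl | rfl | rfl | rfl | rfl | rfl <;>
    simp only [map_pow, map_mul, FreeGroup.lift_apply_of]
  exacts [hsq 0, hsq 1, hsq 2, hpow 0 1, hpow 1 2, hpow 2 0]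

/-- The homomorphism from `Δ(k', l', m')` to the Coxeter group of its matrix that sends `c_i` to the
simple reflection `s_i`. -/
def triToCoxeterGroup : Tri k' l' m' →* (triCoxeterMatrix hk hl hm).Group :=
  PresentedGroup.toGroup (rels := triRels k' l' m')
    fun _ ↦ lift_simple_eq_one_of_mem_triRels hk hl hm

theorem triToCoxeterGroup_cgen (i : Fin 3) :
    triToCoxeterGroup hk hl hm (cgen k' l' m' i) = (triCoxeterMatrix hk hl hm).simple i :=
  PresentedGroup.toGroup.of (rels := triRels k' l' m') _

/-- The inverse of `triToCoxeterGroup`. -/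
noncomputable def coxeterGroupToTri : (triCoxeterMatrix hk hl hm).Group →* Tri k' l' m' :=
  (triCoxeterMatrix hk hl hm).toCoxeterSystem.lift ⟨cgen k' l' m', isLiftable_cgen hk hl hm⟩

theorem coxeterGroupToTri_simple (i : Fin 3) :
    coxeterGroupToTri hk hl hm ((triCoxeterMatrix hk hl hm).simple i) = cgen k' l' m' i :=
  (triCoxeterMatrix hk hl hm).toCoxeterSystem.lift_apply_simple (isLiftable_cgen hk hl hm) i

theorem coxeterGroupToTri_comp_triToCoxeterGroup :
    (coxeterGroupToTri hk hl hm).comp (triToCoxeterGroup hk hl hm) = .id (Tri k' l' m') :=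
  PresentedGroup.ext (rels := triRels k' l' m') fun i ↦
    (congrArg _ (triToCoxeterGroup_cgen hk hl hm i)).trans (coxeterGroupToTri_simple hk hl hm i)

theorem triToCoxeterGroup_comp_coxeterGroupToTri :
    (triToCoxeterGroup hk hl hm).comp (coxeterGroupToTri hk hl hm) = .id _ :=
  (triCoxeterMatrix hk hl hm).toCoxeterSystem.ext_simple fun i ↦
    (congrArg _ (coxeterGroupToTri_simple hk hl hm i)).trans (triToCoxeterGroup_cgen hk hl hm i)

/-- `Δ(k', l', m')` is a Coxeter group with simple reflections `c₀, c₁, c₂`. -/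
noncomputable def triCoxeterSystem : CoxeterSystem (triCoxeterMatrix hk hl hm) (Tri k' l' m') where
  mulEquiv := (triToCoxeterGroup hk hl hm).toMulEquiv (coxeterGroupToTri hk hl hm)
    (coxeterGroupToTri_comp_triToCoxeterGroup hk hl hm)
    (triToCoxeterGroup_comp_coxeterGroupToTri hk hl hm)

theorem triCoxeterSystem_simple : (triCoxeterSystem hk hl hm).simple = cgen k' l' m' :=
  funext (coxeterGroupToTri_simple hk hl hm)

end Triangle

section EvenOddOdd

variable {k l m : ℕ}

/-- Conjugators from the generators `c₀`, `c₁`, `c₂` to `c₀`. -/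
def triTransporter (k l m : ℕ) : Fin 3 → Tri (2 * k) (2 * l + 1) (2 * m + 1) :=
  ![1, (cgen _ _ _ 2 * cgen _ _ _ 0) ^ m * (cgen _ _ _ 1 * cgen _ _ _ 2) ^ l,
    (cgen _ _ _ 2 * cgen _ _ _ 0) ^ m]

theorem semiconjBy_triTransporter (i : Fin 3) :
    SemiconjBy (triTransporter k l m i) (cgen _ _ _ i) (cgen _ _ _ 0) := by
  have h₁₂ := semiconjBy_mul_pow_left_right (cgen_mul_self 1) (cgen_mul_self 2)
    (cgen_one_mul_cgen_two_pow (k' := 2 * k) (l' := 2 * l + 1) (m' := 2 * m + 1))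
  have h₂₀ := semiconjBy_mul_pow_left_right (cgen_mul_self 2) (cgen_mul_self 0)
    (cgen_two_mul_cgen_zero_pow (k' := 2 * k) (l' := 2 * l + 1) (m' := 2 * m + 1))
  fin_cases i
  exacts [SemiconjBy.one_left _, h₂₀.mul_left h₁₂, h₂₀]

theorem isConj_cgen (i j : Fin 3) :
    IsConj (cgen (2 * k) (2 * l + 1) (2 * m + 1) i) (cgen _ _ _ j) := by
  have isConj_zero (i : Fin 3) : IsConj (cgen (2 * k) (2 * l + 1) (2 * m + 1) i) (cgen _ _ _ 0) :=
    ⟨toUnits (triTransporter k l m i), semiconjBy_triTransporter i⟩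
  exact (isConj_zero i).trans (isConj_zero j).symm

variable (k) (hl : 1 ≤ l) (hm : 1 ≤ m)

/-- The Coxeter matrix of `Δ(2k, 2l + 1, 2m + 1)`. -/
abbrev evenOddOddMatrix : CoxeterMatrix (Fin 3) :=
  triCoxeterMatrix (k' := 2 * k) (l' := 2 * l + 1) (m' := 2 * m + 1) (by lia) (by lia) (by lia)

/-- The Coxeter system of `Δ(2k, 2l + 1, 2m + 1)` with simple reflections `c₀, c₁, c₂`. -/
noncomputable abbrev evenOddOddSystem :
    CoxeterSystem (evenOddOddMatrix k hl hm) (Tri (2 * k) (2 * l + 1) (2 * m + 1)) :=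
  triCoxeterSystem _ _ _

theorem edgeLoop_triTransporter_zero_one :
    edgeLoop (evenOddOddSystem k hl hm) (triTransporter k l m) 0 1 =
      (cgen _ _ _ 0 * cgen _ _ _ 1) ^ k := by
  rw [edgeLoop_of_eq_two_mul _ _ (n := k) rfl, triCoxeterSystem_simple]
  simp [triTransporter]

theorem edgeLoop_triTransporter_one_zero :
    edgeLoop (evenOddOddSystem k hl hm) (triTransporter k l m) 1 0 =
      (cgen _ _ _ 2 * cgen _ _ _ 0) ^ m * (cgen _ _ _ 1 * cgen _ _ _ 2) ^ l *
        (cgen _ _ _ 1 * cgen _ _ _ 0) ^ k *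
        (cgen _ _ _ 2 * cgen _ _ _ 1) ^ l * (cgen _ _ _ 0 * cgen _ _ _ 2) ^ m := by
  rw [edgeLoop_of_eq_two_mul _ _ (n := k) rfl, triCoxeterSystem_simple]
  simp [triTransporter, mul_assoc, inv_cgen_mul_cgen_pow]

theorem edgeLoop_triTransporter_eq_one {i j : Fin 3} (h₀₁ : (i, j) ≠ (0, 1))
    (h₁₀ : (i, j) ≠ (1, 0)) :
    edgeLoop (evenOddOddSystem k hl hm) (triTransporter k l m) i j = 1 := by
  have eq_one {i j : Fin 3} {n : ℕ} (hn : evenOddOddMatrix k hl hm i j = 2 * n + 1)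
      (h : triTransporter k l m j * (cgen _ _ _ i * cgen _ _ _ j) ^ n = triTransporter k l m i) :
      edgeLoop (evenOddOddSystem k hl hm) (triTransporter k l m) i j = 1 := by
    rw [edgeLoop_of_eq_two_mul_add_one _ _ hn, triCoxeterSystem_simple, h, mul_inv_cancel]
  match i, j with
  | 0, 0 | 1, 1 | 2, 2 => exact edgeLoop_self _ _ _
  | 0, 1 | 1, 0 => contradiction
  | 0, 2 => exact eq_one rfl (by simp [triTransporter, ← inv_cgen_mul_cgen_pow 2 0])
  | 1, 2 => exact eq_one rfl rfl
  | 2, 0 => exact eq_one rfl (one_mul _)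
  | 2, 1 => exact eq_one rfl (by simp [triTransporter, ← inv_cgen_mul_cgen_pow 1 2])

theorem closure_insert_range_edgeLoop_triTransporter (x : Tri (2 * k) (2 * l + 1) (2 * m + 1)) :
    Subgroup.closure (insert x (Set.range (Function.uncurry
      (edgeLoop (evenOddOddSystem k hl hm) (triTransporter k l m))))) =
    Subgroup.closure {x, edgeLoop (evenOddOddSystem k hl hm) (triTransporter k l m) 0 1,
      edgeLoop (evenOddOddSystem k hl hm) (triTransporter k l m) 1 0} := by
  apply le_antisymm
  · rw [Subgroup.closure_le]
    rintro _ (rfl | ⟨⟨i, j⟩, rfl⟩)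
    · exact Subgroup.subset_closure (.inl rfl)
    by_cases h₀₁ : (i, j) = (0, 1)
    · rw [h₀₁]
      exact Subgroup.subset_closure (.inr (.inl rfl))
    by_cases h₁₀ : (i, j) = (1, 0)
    · rw [h₁₀]
      exact Subgroup.subset_closure (.inr (.inr rfl))
    rw [Function.uncurry_apply_pair, edgeLoop_triTransporter_eq_one k hl hm h₀₁ h₁₀]
    exact one_mem _
  · gcongr
    rintro _ (rfl | rfl)
    exacts [⟨(0, 1), rfl⟩, ⟨(1, 0), rfl⟩]

end EvenOddOdd

theorem centralizer_even_odd_odd_general (k l m : ℕ) (hl : 1 ≤ l) (hm : 1 ≤ m) :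
    ∀ c₀ c₁ c₂ : Tri (2 * k) (2 * l + 1) (2 * m + 1),
      c₀ = cgen _ _ _ 0 → c₁ = cgen _ _ _ 1 → c₂ = cgen _ _ _ 2 →
      IsConj c₀ c₁ ∧ IsConj c₁ c₂ ∧ IsConj c₀ c₂ ∧
      Subgroup.centralizer {c₀} =
        Subgroup.closure {c₀, (c₀ * c₁) ^ k,
          (c₂ * c₀) ^ m * (c₁ * c₂) ^ l * (c₁ * c₀) ^ k * (c₂ * c₁) ^ l * (c₀ * c₂) ^ m} := by
  rintro _ _ _ rfl rfl rfl
  refine ⟨isConj_cgen 0 1, isConj_cgen 1 2, isConj_cgen 0 2, ?_⟩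
  have hg (i : Fin 3) : SemiconjBy (triTransporter k l m i)
      ((evenOddOddSystem k hl hm).simple i) (cgen _ _ _ 0) := by
    rw [triCoxeterSystem_simple]
    exact semiconjBy_triTransporter i
  rw [centralizer_eq_closure_edgeLoop _ hg, closure_insert_range_edgeLoop_triTransporter,
    edgeLoop_triTransporter_zero_one, edgeLoop_triTransporter_one_zero]

/-- in `Δ(2k, 2l+1, 2m+1)` (first link period even, other two odd), the
canonical reflections are pairwise conjugate and the centralizer of `c₀` is generated by
`c₀`, `(c₀c₁)^k`, and `(c₂c₀)^m (c₁c₂)^l (c₁c₀)^k (c₂c₁)^l (c₀c₂)^m`. -/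
theorem centralizer_even_odd_odd (k l m : ℕ) (hk : 1 ≤ k) (hl : 1 ≤ l) (hm : 1 ≤ m)
    (harea : (1 : ℚ) / (2 * k) + 1 / (2 * l + 1) + 1 / (2 * m + 1) < 1) :
    ∀ c₀ c₁ c₂ : Tri (2 * k) (2 * l + 1) (2 * m + 1),
      c₀ = cgen _ _ _ 0 → c₁ = cgen _ _ _ 1 → c₂ = cgen _ _ _ 2 →
      IsConj c₀ c₁ ∧ IsConj c₁ c₂ ∧ IsConj c₀ c₂ ∧
      Subgroup.centralizer {c₀} =
        Subgroup.closure {c₀, (c₀ * c₁) ^ k,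
          (c₂ * c₀) ^ m * (c₁ * c₂) ^ l * (c₁ * c₀) ^ k * (c₂ * c₁) ^ l * (c₀ * c₂) ^ m} :=
  centralizer_even_odd_odd_general k l m hl hm
end
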